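/- arXiv:1004.1015 — 7 statements merged into one kernel-verified Lean document; each statement's English description precedes it below -/
import Mathlib

section
/- The trigonometric SOS R-matrix satisfies unitarity: for all λ, θ ∈ ℂ with sinh θ ≠ 0, R(λ;θ) · R₂₁(−λ;θ) = −sinh(λ−η) sinh(λ+η) · Id on ℂ² ⊗ ℂ². -/
/-!
`R` preserves the weight of `e_i ⊗ e_j`, so the product splits into two scalar blocks, on `e₊ ⊗ e₊`
and `e₋ ⊗ e₋`, and one `2 × 2` block on the span of `e₊ ⊗ e₋` and `e₋ ⊗ e₊`. Conjugation by the flip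
swaps both tensor factors in each index. In the `2 × 2` block the off-diagonal entries cancel
identically, and the diagonal ones reduce to `sinh² η - sinh² λ` through
`sinh (x - y) * sinh (x + y) = sinh² x - sinh² y`.
-/

open Matrix Kronecker

/-- The trigonometric SOS R-matrix on `ℂ² ⊗ ℂ²`, with row index the upper pair of
indices and column index the lower pair (`0` = `+`, `1` = `-`). -/
noncomputable def Rmat (η lam θ : ℂ) : Matrix (Fin 2 × Fin 2) (Fin 2 × Fin 2) ℂ :=
  Matrix.of fun p q =>
    if p = ((0 : Fin 2), (0 : Fin 2)) ∧ q = ((0 : Fin 2), (0 : Fin 2)) then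
      Complex.sinh (lam + η)
    else if p = (1, 1) ∧ q = (1, 1) then Complex.sinh (lam + η)
    else if p = (0, 1) ∧ q = (0, 1) then
      Complex.sinh lam * Complex.sinh (θ - η) / Complex.sinh θ
    else if p = (1, 0) ∧ q = (1, 0) then
      Complex.sinh lam * Complex.sinh (θ + η) / Complex.sinh θ
    else if p = (0, 1) ∧ q = (1, 0) then
      Complex.sinh η * Complex.sinh (θ - lam) / Complex.sinh θ
    else if p = (1, 0) ∧ q = (0, 1) then
      Complex.sinh η * Complex.sinh (θ + lam) / Complex.sinh θ
    else 0

/-- The Pauli matrix `σ_z = diag(1, -1)`. -/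
def sigmaZ : Matrix (Fin 2) (Fin 2) ℂ := !![1, 0; 0, -1]

/-- The flip (permutation) operator `P` on `ℂ² ⊗ ℂ²`. -/
noncomputable def Pflip : Matrix (Fin 2 × Fin 2) (Fin 2 × Fin 2) ℂ :=
  Matrix.of fun p q => if p.1 = q.2 ∧ p.2 = q.1 then 1 else 0

/-- `R₂₁(λ;θ) = P R(λ;θ) P`. -/
noncomputable def R21mat (η lam θ : ℂ) : Matrix (Fin 2 × Fin 2) (Fin 2 × Fin 2) ℂ :=
  Pflip * Rmat η lam θ * Pflip

lemma sinh_sub_mul_sinh_add (x y : ℂ) :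
    Complex.sinh (x - y) * Complex.sinh (x + y) = Complex.sinh x ^ 2 - Complex.sinh y ^ 2 := by
  rw [Complex.sinh_sub, Complex.sinh_add]
  linear_combination Complex.sinh x ^ 2 * Complex.cosh_sq y - Complex.sinh y ^ 2 * Complex.cosh_sq x

/-- Conjugation by the flip exchanges the two tensor factors in both indices. -/
lemma R21mat_apply (η lam θ : ℂ) (p q : Fin 2 × Fin 2) :
    R21mat η lam θ p q = Rmat η lam θ p.swap q.swap := by
  obtain ⟨a, b⟩ := p
  obtain ⟨c, d⟩ := q
  fin_cases a <;> fin_cases b <;> fin_cases c <;> fin_cases d <;>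
    simp [R21mat, Pflip, Matrix.mul_apply, Fintype.sum_prod_type]

/-- Unitarity: `R(λ;θ) · R₂₁(−λ;θ) = −sinh(λ−η) sinh(λ+η) · Id`. -/
theorem unitarity (η lam θ : ℂ) (hθ : Complex.sinh θ ≠ 0) :
    Rmat η lam θ * R21mat η (-lam) θ =
      (-(Complex.sinh (lam - η) * Complex.sinh (lam + η))) •
        (1 : Matrix (Fin 2 × Fin 2) (Fin 2 × Fin 2) ℂ) := by
  have h := sinh_sub_mul_sinh_add
  have hneg : Complex.sinh (-lam + η) = -Complex.sinh (lam - η) := by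
    rw [← Complex.sinh_neg]; ring_nf
  ext ⟨a, b⟩ ⟨c, d⟩
  rw [Matrix.mul_apply]
  simp only [R21mat_apply, Fintype.sum_prod_type, Fin.sum_univ_two]
  fin_cases a <;> fin_cases b <;> fin_cases c <;> fin_cases d <;>
    simp [Rmat, hneg, ← sub_eq_add_neg]
  -- The six entries that survive are those of the weight blocks, in lexicographic order.
  · ring
  · field_simp
    linear_combination -Complex.sinh lam ^ 2 * h θ η + Complex.sinh η ^ 2 * h θ lam +
      Complex.sinh θ ^ 2 * h lam η
  · ring
  · ring
  · field_simp
    linear_combination -Complex.sinh lam ^ 2 * h θ η + Complex.sinh η ^ 2 * h θ lam +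
      Complex.sinh θ ^ 2 * h lam η
  · ring
end

section
/- The trigonometric SOS R-matrix satisfies the dynamical Yang–Baxter equation: for all λ₁, λ₂, λ₃, θ ∈ ℂ with sinh θ ≠ 0, sinh(θ−η) ≠ 0 and sinh(θ+η) ≠ 0, on (ℂ²)^{⊗3} one has R₁₂(λ₁−λ₂; θ−η σ^z_3) R₁₃(λ₁−λ₃; θ) R₂₃(λ₂−λ₃; θ−η σ^z_1) = R₂₃(λ₂−λ₃; θ) R₁₃(λ₁−λ₃; θ−η σ^z_2) R₁₂(λ₁−λ₂; θ). -/
/-!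
Both sides are compared entry by entry. The R-matrix preserves the number of minus signs
(the six-vertex ice rule), so of the `64` entries only `1 + 9 + 9 + 1` are not trivially zero.
The shifted operators are block diagonal in the factor carrying the shift
(`R12dyn3_apply`, `R23dyn1_apply`, `R13dyn2_apply`), so each remaining entry is an identity between
sums of products of three elements of the R-matrix. Only `λ₁ - λ₂ = x`, `λ₂ - λ₃ = y` and
`λ₁ - λ₃ = x + y` enter. After clearing the nonzero denominators `sinh θ` and `sinh (θ ± η)`,
writing every `sinh` through exponentials (`sinh_eq_exp_sub_inv`) turns the entry into an identity
of Laurent polynomials in `exp η`, `exp x`, `exp y`, `exp θ`.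
-/

open Matrix Kronecker

/-- `R₁₂` acting on the triple tensor product `ℂ² ⊗ ℂ² ⊗ ℂ²`. -/
noncomputable def R12of (η lam θ : ℂ) :
    Matrix (Fin 2 × Fin 2 × Fin 2) (Fin 2 × Fin 2 × Fin 2) ℂ :=
  Matrix.of fun p q =>
    Rmat η lam θ (p.1, p.2.1) (q.1, q.2.1) * (if p.2.2 = q.2.2 then 1 else 0)

/-- `R₁₃` acting on the triple tensor product `ℂ² ⊗ ℂ² ⊗ ℂ²`. -/
noncomputable def R13of (η lam θ : ℂ) :
    Matrix (Fin 2 × Fin 2 × Fin 2) (Fin 2 × Fin 2 × Fin 2) ℂ :=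
  Matrix.of fun p q =>
    Rmat η lam θ (p.1, p.2.2) (q.1, q.2.2) * (if p.2.1 = q.2.1 then 1 else 0)

/-- `R₂₃` acting on the triple tensor product `ℂ² ⊗ ℂ² ⊗ ℂ²`. -/
noncomputable def R23of (η lam θ : ℂ) :
    Matrix (Fin 2 × Fin 2 × Fin 2) (Fin 2 × Fin 2 × Fin 2) ℂ :=
  Matrix.of fun p q =>
    Rmat η lam θ (p.2.1, p.2.2) (q.2.1, q.2.2) * (if p.1 = q.1 then 1 else 0)

/-- Projection of the first tensor factor onto `e_a`. -/
noncomputable def P1proj (a : Fin 2) :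
    Matrix (Fin 2 × Fin 2 × Fin 2) (Fin 2 × Fin 2 × Fin 2) ℂ :=
  Matrix.of fun p q => if p = q ∧ p.1 = a then 1 else 0

/-- Projection of the second tensor factor onto `e_a`. -/
noncomputable def P2proj (a : Fin 2) :
    Matrix (Fin 2 × Fin 2 × Fin 2) (Fin 2 × Fin 2 × Fin 2) ℂ :=
  Matrix.of fun p q => if p = q ∧ p.2.1 = a then 1 else 0

/-- Projection of the third tensor factor onto `e_a`. -/
noncomputable def P3proj (a : Fin 2) :
    Matrix (Fin 2 × Fin 2 × Fin 2) (Fin 2 × Fin 2 × Fin 2) ℂ :=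
  Matrix.of fun p q => if p = q ∧ p.2.2 = a then 1 else 0

/-- `R₁₂(λ; θ − η σ^z_3) = R₁₂(λ;θ−η) P^{(3)}_+ + R₁₂(λ;θ+η) P^{(3)}_−`. -/
noncomputable def R12dyn3 (η lam θ : ℂ) :
    Matrix (Fin 2 × Fin 2 × Fin 2) (Fin 2 × Fin 2 × Fin 2) ℂ :=
  R12of η lam (θ - η) * P3proj 0 + R12of η lam (θ + η) * P3proj 1

/-- `R₂₃(λ; θ − η σ^z_1) = R₂₃(λ;θ−η) P^{(1)}_+ + R₂₃(λ;θ+η) P^{(1)}_−`. -/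
noncomputable def R23dyn1 (η lam θ : ℂ) :
    Matrix (Fin 2 × Fin 2 × Fin 2) (Fin 2 × Fin 2 × Fin 2) ℂ :=
  R23of η lam (θ - η) * P1proj 0 + R23of η lam (θ + η) * P1proj 1

/-- `R₁₃(λ; θ − η σ^z_2) = R₁₃(λ;θ−η) P^{(2)}_+ + R₁₃(λ;θ+η) P^{(2)}_−`. -/
noncomputable def R13dyn2 (η lam θ : ℂ) :
    Matrix (Fin 2 × Fin 2 × Fin 2) (Fin 2 × Fin 2 × Fin 2) ℂ :=
  R13of η lam (θ - η) * P2proj 0 + R13of η lam (θ + η) * P2proj 1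

/-- The matrix elements of the R-matrix as a lookup table, so that evaluation at concrete indices is
cheap. -/
theorem Rmat_apply (η lam θ : ℂ) (a b c d : Fin 2) :
    Rmat η lam θ (a, b) (c, d) =
      (![![![![Complex.sinh (lam + η), 0], ![0, 0]],
            ![![0, Complex.sinh lam * Complex.sinh (θ - η) / Complex.sinh θ],
              ![Complex.sinh η * Complex.sinh (θ - lam) / Complex.sinh θ, 0]]],
          ![![![0, Complex.sinh η * Complex.sinh (θ + lam) / Complex.sinh θ],
              ![Complex.sinh lam * Complex.sinh (θ + η) / Complex.sinh θ, 0]],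
            ![![0, 0], ![0, Complex.sinh (lam + η)]]]] :
        Fin 2 → Fin 2 → Fin 2 → Fin 2 → ℂ) a b c d := by
  fin_cases a <;> fin_cases b <;> fin_cases c <;> fin_cases d <;> simp [Rmat]

/-- `R₁₂(λ; θ − η σ^z_3)` is block diagonal in the third factor, with the dynamical parameter
shifted according to the block; likewise for the two lemmas below. -/
theorem R12dyn3_apply (η lam θ : ℂ) (a b c a' b' c' : Fin 2) :
    R12dyn3 η lam θ (a, b, c) (a', b', c') =
      if c = c' then Rmat η lam (if c = 0 then θ - η else θ + η) (a, b) (a', b') else 0 := by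
  fin_cases c <;> fin_cases c' <;>
    simp [R12dyn3, R12of, P3proj, Matrix.mul_apply, ite_and]

theorem R23dyn1_apply (η lam θ : ℂ) (a b c a' b' c' : Fin 2) :
    R23dyn1 η lam θ (a, b, c) (a', b', c') =
      if a = a' then Rmat η lam (if a = 0 then θ - η else θ + η) (b, c) (b', c') else 0 := by
  fin_cases a <;> fin_cases a' <;>
    simp [R23dyn1, R23of, P1proj, Matrix.mul_apply, ite_and]

theorem R13dyn2_apply (η lam θ : ℂ) (a b c a' b' c' : Fin 2) :
    R13dyn2 η lam θ (a, b, c) (a', b', c') =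
      if b = b' then Rmat η lam (if b = 0 then θ - η else θ + η) (a, c) (a', c') else 0 := by
  fin_cases b <;> fin_cases b' <;>
    simp [R13dyn2, R13of, P2proj, Matrix.mul_apply, ite_and]

theorem sinh_eq_exp_sub_inv (z : ℂ) :
    Complex.sinh z = (Complex.exp z - (Complex.exp z)⁻¹) / 2 := by
  rw [Complex.sinh, Complex.exp_neg]

set_option maxHeartbeats 4000000 in
/-- The dynamical Yang–Baxter equation for the trigonometric SOS R-matrix. -/
theorem dynamical_yang_baxter (η lam1 lam2 lam3 θ : ℂ) (hθ : Complex.sinh θ ≠ 0)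
    (hθm : Complex.sinh (θ - η) ≠ 0) (hθp : Complex.sinh (θ + η) ≠ 0) :
    R12dyn3 η (lam1 - lam2) θ * R13of η (lam1 - lam3) θ * R23dyn1 η (lam2 - lam3) θ =
      R23of η (lam2 - lam3) θ * R13dyn2 η (lam1 - lam3) θ * R12of η (lam1 - lam2) θ := by
  obtain ⟨x, hx⟩ : ∃ x, lam1 - lam2 = x := ⟨_, rfl⟩
  obtain ⟨y, hy⟩ : ∃ y, lam2 - lam3 = y := ⟨_, rfl⟩
  have hxy : lam1 - lam3 = x + y := by rw [← hx, ← hy]; ring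
  rw [hx, hy, hxy]
  have h1 := Complex.exp_ne_zero η
  have h2 := Complex.exp_ne_zero x
  have h3 := Complex.exp_ne_zero y
  have h4 := Complex.exp_ne_zero θ
  ext ⟨a, b, c⟩ ⟨a', b', c'⟩
  simp only [Matrix.mul_apply, Fintype.sum_prod_type, Fin.sum_univ_two, R12dyn3_apply,
    R23dyn1_apply, R13dyn2_apply, R12of, R13of, R23of, Matrix.of_apply]
  fin_cases a <;> fin_cases b <;> fin_cases c <;> fin_cases a' <;> fin_cases b' <;>
    fin_cases c' <;> simp [Rmat_apply]
  all_goals field_simp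
  -- The entries with nontrivial exchange terms are left.
  all_goals simp only [sinh_eq_exp_sub_inv, Complex.exp_add, Complex.exp_sub]
  all_goals field_simp
  all_goals ring
end

section
/- The diagonal boundary matrix K(λ;θ) satisfies the reflection equation with the trigonometric SOS R-matrix: for all λ₁, λ₂, θ ∈ ℂ (generic, so that sinh θ ≠ 0 and all denominators in K are nonzero), on ℂ² ⊗ ℂ² one has R₁₂(λ₁−λ₂;θ) K₁(λ₁;θ) R₂₁(λ₁+λ₂;θ) K₂(λ₂;θ) = K₂(λ₂;θ) R₁₂(λ₁+λ₂;θ) K₁(λ₁;θ) R₂₁(λ₁−λ₂;θ), where K₁ = K ⊗ 1 and K₂ = 1 ⊗ K. -/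
/-! Both sides preserve the total weight, so only the two extreme diagonal entries and the
block spanned by `e₊ ⊗ e₋`, `e₋ ⊗ e₊` can be nonzero. All diagonal entries agree because the
two sides differ there only by exchanging `λ₁ - λ₂` and `λ₁ + λ₂`, in which they are symmetric.
After removing the common factors `sinh η · sinh (θ ∓ η) / sinh² θ`, the two off-diagonal entries
give one and the same identity, free of `η`: this is `offdiag_identity`. Its cleared form
`offdiag_identity_cleared` follows from the product formula for `sinh`. With
`c = cosh (θ + 2ζ)`, `p± = cosh (θ ± 2λ₁)` and `q± = cosh (θ ± 2λ₂)`, the two brackets in it become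
`(p₊ - p₋)(c - q₊)` and `(p₊ - p₋)(c - q₋)` up to a common constant, so that both sides are
proportional to `(p₊ - p₋)(c - q₊)(c - q₋)`. -/

open Matrix Kronecker

/-- The diagonal boundary matrix
`K(λ;θ) = diag( sinh(θ+ζ−λ)/sinh(θ+ζ+λ), sinh(ζ−λ)/sinh(ζ+λ) )`. -/
noncomputable def Kmat (ζ lam θ : ℂ) : Matrix (Fin 2) (Fin 2) ℂ :=
  !![Complex.sinh (θ + ζ - lam) / Complex.sinh (θ + ζ + lam), 0;
     0, Complex.sinh (ζ - lam) / Complex.sinh (ζ + lam)]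

lemma sinh_mul_sinh_eq (x y : ℂ) :
    Complex.sinh x * Complex.sinh y = (Complex.cosh (x + y) - Complex.cosh (x - y)) / 2 := by
  rw [Complex.cosh_add, Complex.cosh_sub]
  ring

/-- The off-diagonal identity with the denominators of `K` cleared. -/
lemma offdiag_identity_cleared (a b t z : ℂ) :
    (Complex.sinh (a - b) * Complex.sinh (t + (a + b)) *
          (Complex.sinh (t + z - a) * Complex.sinh (z + a)) +
        Complex.sinh (t - (a - b)) * Complex.sinh (a + b) *
          (Complex.sinh (t + z + a) * Complex.sinh (z - a))) *
      (Complex.sinh (t + z - b) * Complex.sinh (z + b)) =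
    (Complex.sinh (a + b) * Complex.sinh (t + (a - b)) *
          (Complex.sinh (t + z - a) * Complex.sinh (z + a)) +
        Complex.sinh (t - (a + b)) * Complex.sinh (a - b) *
          (Complex.sinh (t + z + a) * Complex.sinh (z - a))) *
      (Complex.sinh (t + z + b) * Complex.sinh (z - b)) := by
  have e1 : Complex.sinh (a - b) * Complex.sinh (t + (a + b)) =
      (Complex.cosh (t + 2 * a) - Complex.cosh (t + 2 * b)) / 2 := by
    rw [mul_comm, sinh_mul_sinh_eq]; ring_nf
  have e2 : Complex.sinh (t - (a - b)) * Complex.sinh (a + b) =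
      (Complex.cosh (t + 2 * b) - Complex.cosh (t - 2 * a)) / 2 := by
    rw [sinh_mul_sinh_eq]; ring_nf
  have e3 : Complex.sinh (a + b) * Complex.sinh (t + (a - b)) =
      (Complex.cosh (t + 2 * a) - Complex.cosh (t - 2 * b)) / 2 := by
    rw [mul_comm, sinh_mul_sinh_eq]; ring_nf
  have e4 : Complex.sinh (t - (a + b)) * Complex.sinh (a - b) =
      (Complex.cosh (t - 2 * b) - Complex.cosh (t - 2 * a)) / 2 := by
    rw [sinh_mul_sinh_eq]; ring_nf
  have e5 (x : ℂ) : Complex.sinh (t + z - x) * Complex.sinh (z + x) =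
      (Complex.cosh (t + 2 * z) - Complex.cosh (t - 2 * x)) / 2 := by
    rw [sinh_mul_sinh_eq]; ring_nf
  have e6 (x : ℂ) : Complex.sinh (t + z + x) * Complex.sinh (z - x) =
      (Complex.cosh (t + 2 * z) - Complex.cosh (t + 2 * x)) / 2 := by
    rw [sinh_mul_sinh_eq]; ring_nf
  rw [e1, e2, e3, e4, e5, e5, e6, e6]
  ring

/-- The relation on the entries of `K` to which both off-diagonal entries of the reflection
equation reduce. -/
lemma offdiag_identity (a b t z : ℂ)
    (h1 : Complex.sinh (t + z + a) ≠ 0) (h2 : Complex.sinh (z + a) ≠ 0)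
    (h3 : Complex.sinh (t + z + b) ≠ 0) (h4 : Complex.sinh (z + b) ≠ 0) :
    (Complex.sinh (a - b) * Complex.sinh (t + (a + b)) * Kmat z a t 0 0 +
        Complex.sinh (t - (a - b)) * Complex.sinh (a + b) * Kmat z a t 1 1) * Kmat z b t 0 0 =
    (Complex.sinh (a + b) * Complex.sinh (t + (a - b)) * Kmat z a t 0 0 +
        Complex.sinh (t - (a + b)) * Complex.sinh (a - b) * Kmat z a t 1 1) *
      Kmat z b t 1 1 := by
  have key := offdiag_identity_cleared a b t z
  simp only [Kmat, Matrix.of_apply, Matrix.cons_val_zero, Matrix.cons_val_one,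
    Matrix.cons_val']
  field_simp
  linear_combination key

/-- Conjugation by the flip exchanges the two tensor factors in both indices. -/
lemma R21mat_apply_s5 (η lam θ : ℂ) (i j k l : Fin 2) :
    R21mat η lam θ (i, j) (k, l) = Rmat η lam θ (j, i) (l, k) := by
  fin_cases i <;> fin_cases j <;> fin_cases k <;> fin_cases l <;>
    simp [R21mat, Pflip, Matrix.mul_apply, Fintype.sum_prod_type]

/-- The reflection equation for the diagonal boundary matrix `K` with the
trigonometric SOS R-matrix. -/
theorem reflection_equation (η ζ lam1 lam2 θ : ℂ) (hθ : Complex.sinh θ ≠ 0)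
    (h1 : Complex.sinh (θ + ζ + lam1) ≠ 0) (h2 : Complex.sinh (ζ + lam1) ≠ 0)
    (h3 : Complex.sinh (θ + ζ + lam2) ≠ 0) (h4 : Complex.sinh (ζ + lam2) ≠ 0) :
    Rmat η (lam1 - lam2) θ * (Kmat ζ lam1 θ ⊗ₖ (1 : Matrix (Fin 2) (Fin 2) ℂ)) *
        R21mat η (lam1 + lam2) θ * ((1 : Matrix (Fin 2) (Fin 2) ℂ) ⊗ₖ Kmat ζ lam2 θ) =
      ((1 : Matrix (Fin 2) (Fin 2) ℂ) ⊗ₖ Kmat ζ lam2 θ) * Rmat η (lam1 + lam2) θ *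
        (Kmat ζ lam1 θ ⊗ₖ (1 : Matrix (Fin 2) (Fin 2) ℂ)) * R21mat η (lam1 - lam2) θ := by
  have key := offdiag_identity lam1 lam2 θ ζ h1 h2 h3 h4
  have K01 (l : ℂ) : Kmat ζ l θ 0 1 = 0 := rfl
  have K10 (l : ℂ) : Kmat ζ l θ 1 0 = 0 := rfl
  ext ⟨i, j⟩ ⟨k, l⟩
  fin_cases i <;> fin_cases j <;> fin_cases k <;> fin_cases l <;>
    simp [Matrix.mul_apply, Fintype.sum_prod_type, R21mat_apply_s5, Rmat, K01, K10,
      Matrix.one_apply]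
  -- What is left is, in order: `(++,++)`, `(+-,+-)`, `(+-,-+)`, `(-+,+-)`, `(-+,-+)`, `(--,--)`.
  · ring
  · ring
  · linear_combination (Complex.sinh η * Complex.sinh (θ - η) / Complex.sinh θ ^ 2) * key
  · linear_combination (-(Complex.sinh η * Complex.sinh (θ + η) / Complex.sinh θ ^ 2)) * key
  · ring
  · ring
end

section
/- The double-row monodromy matrix satisfies the dynamical reflection equation: for all λ₁, λ₂, θ ∈ ℂ (generic, so that all denominators occurring in R and K are nonzero), on ℂ²₁ ⊗ ℂ²₂ ⊗ (ℂ²)^{⊗N} one has R₁₂(λ₁−λ₂; θ−η Σ_{i=1}^N σ^z_i) 𝒯₁(λ₁;θ) R₂₁(λ₁+λ₂; θ−η Σ_{i=1}^N σ^z_i) 𝒯₂(λ₂;θ) = 𝒯₂(λ₂;θ) R₁₂(λ₁+λ₂; θ−η Σ_{i=1}^N σ^z_i) 𝒯₁(λ₁;θ) R₂₁(λ₁−λ₂; θ−η Σ_{i=1}^N σ^z_i), where subscripts 1, 2 refer to the two auxiliary ℂ² factors and Σ_{i=1}^N σ^z_i acts on the quantum space. -/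
/-!
The dynamical reflection equation is proved by induction on the length of the chain, adding
sites at the front (Sklyanin's dressing). Write `Θ = θ - η Σ_{i ≥ 2} σ^z_i` and let `a` be the
first site. Then `𝒯₀ = R₀ₐ(λ - ξ₁; Θ) 𝒯'₀ Rₐ₀(λ + ξ₁; Θ)` with `𝒯'` the double-row monodromy
matrix of sites `2, …, N` (`Tcal_succ`), and the outer R-matrices of the reflection equation
have dynamical parameter `Θ - η σ^z_a`.

Two facts transport the equation from `𝒯'` to `𝒯` (`dressing`). One is the dynamical
Yang-Baxter equation, used for four orderings of the spaces `1, 2, a` (`dybe`). The other is that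
`𝒯'₁` preserves `σ^z_1 + Σ_{i ≥ 2} σ^z_i` (`preservesSpin_Tcal`), hence commutes with the
matrices acting on `2, a` with dynamical parameter `Θ - η σ^z_1` (`commute_dynR`), and likewise
for `𝒯'₂`. For the empty chain the equation is the one satisfied by the diagonal boundary
matrix (`reflection_core`). It and the Yang-Baxter equation on three spins (`dybe_core`) are
checked entry by entry.

The Yang-Baxter equation is needed at `Θ` and `Θ ± η`, where `Σ_{i ≥ 2} σ^z_i` has integer
eigenvalues of absolute value at most `N - 1`; this is where `sinh (θ + k η) ≠ 0` is used.
-/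

open Matrix

/-- The `σ_z`-eigenvalue of a basis vector of `ℂ²` (`+1` for `e₊ = 0`, `−1` for `e₋ = 1`). -/
noncomputable def szval (a : Fin 2) : ℂ := if a = 0 then 1 else -1

/-- The eigenvalue of `Σ_{c ∈ S} σ^z_c` on the basis vector of `(ℂ²)^{⊗N}` labelled by `s`. -/
noncomputable def szSum {N : ℕ} (S : Finset (Fin N)) (s : Fin N → Fin 2) : ℂ :=
  ∑ j ∈ S, szval (s j)

/-- `R₀ᵢ(λ; θ − η Σ_{j>i} σ^z_j)` acting on `ℂ²₀ ⊗ (ℂ²)^{⊗N}` (auxiliary factor first,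
`i`-th quantum factor second, via the joint eigenspace decomposition of the `σ^z_j`). -/
noncomputable def R0i {N : ℕ} (η lam θ : ℂ) (i : Fin N) :
    Matrix (Fin 2 × (Fin N → Fin 2)) (Fin 2 × (Fin N → Fin 2)) ℂ :=
  Matrix.of fun p q =>
    (if ∀ j, j ≠ i → p.2 j = q.2 j then 1 else 0) *
      Rmat η lam (θ - η * szSum (Finset.univ.filter fun j => i < j) q.2)
        (p.1, p.2 i) (q.1, q.2 i)

/-- `R_{i0}(λ; θ − η Σ_{j>i} σ^z_j)` acting on `ℂ²₀ ⊗ (ℂ²)^{⊗N}` (`i`-th quantum factor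
first, auxiliary factor second). -/
noncomputable def Ri0 {N : ℕ} (η lam θ : ℂ) (i : Fin N) :
    Matrix (Fin 2 × (Fin N → Fin 2)) (Fin 2 × (Fin N → Fin 2)) ℂ :=
  Matrix.of fun p q =>
    (if ∀ j, j ≠ i → p.2 j = q.2 j then 1 else 0) *
      Rmat η lam (θ - η * szSum (Finset.univ.filter fun j => i < j) q.2)
        (p.2 i, p.1) (q.2 i, q.1)

/-- The bulk monodromy matrix
`T₀(λ;θ) = R₀₁(λ−ξ₁; θ−η Σ_{i≥2} σ^z_i) ⋯ R₀N(λ−ξ_N; θ)`. -/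
noncomputable def Tmat {N : ℕ} (η : ℂ) (ξ : Fin N → ℂ) (lam θ : ℂ) :
    Matrix (Fin 2 × (Fin N → Fin 2)) (Fin 2 × (Fin N → Fin 2)) ℂ :=
  (List.ofFn fun i : Fin N => R0i η (lam - ξ i) θ i).prod

/-- The reversed monodromy matrix
`T̂₀(λ;θ) = R_{N0}(λ+ξ_N; θ) ⋯ R_{10}(λ+ξ₁; θ−η Σ_{i≥2} σ^z_i)`. -/
noncomputable def That {N : ℕ} (η : ℂ) (ξ : Fin N → ℂ) (lam θ : ℂ) :
    Matrix (Fin 2 × (Fin N → Fin 2)) (Fin 2 × (Fin N → Fin 2)) ℂ :=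
  (List.ofFn fun i : Fin N => Ri0 η (lam + ξ i) θ i).reverse.prod

/-- The boundary matrix acting on the auxiliary space `0`, identity on the quantum space. -/
noncomputable def K0emb {N : ℕ} (ζ lam θ : ℂ) :
    Matrix (Fin 2 × (Fin N → Fin 2)) (Fin 2 × (Fin N → Fin 2)) ℂ :=
  Matrix.of fun p q => (if p.2 = q.2 then 1 else 0) * Kmat ζ lam θ p.1 q.1

/-- The double-row monodromy matrix `𝒯₀(λ;θ) = T₀(λ;θ) K₀(λ;θ) T̂₀(λ;θ)`. -/
noncomputable def Tcal {N : ℕ} (η ζ : ℂ) (ξ : Fin N → ℂ) (lam θ : ℂ) :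
    Matrix (Fin 2 × (Fin N → Fin 2)) (Fin 2 × (Fin N → Fin 2)) ℂ :=
  Tmat η ξ lam θ * K0emb ζ lam θ * That η ξ lam θ

/-- Embedding of an operator on `ℂ²₁ ⊗ (ℂ²)^{⊗N}` into `ℂ²₁ ⊗ ℂ²₂ ⊗ (ℂ²)^{⊗N}`. -/
noncomputable def emb1 {N : ℕ}
    (M : Matrix (Fin 2 × (Fin N → Fin 2)) (Fin 2 × (Fin N → Fin 2)) ℂ) :
    Matrix (Fin 2 × Fin 2 × (Fin N → Fin 2)) (Fin 2 × Fin 2 × (Fin N → Fin 2)) ℂ :=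
  Matrix.of fun p q => (if p.2.1 = q.2.1 then 1 else 0) * M (p.1, p.2.2) (q.1, q.2.2)

/-- Embedding of an operator on `ℂ²₂ ⊗ (ℂ²)^{⊗N}` into `ℂ²₁ ⊗ ℂ²₂ ⊗ (ℂ²)^{⊗N}`. -/
noncomputable def emb2 {N : ℕ}
    (M : Matrix (Fin 2 × (Fin N → Fin 2)) (Fin 2 × (Fin N → Fin 2)) ℂ) :
    Matrix (Fin 2 × Fin 2 × (Fin N → Fin 2)) (Fin 2 × Fin 2 × (Fin N → Fin 2)) ℂ :=
  Matrix.of fun p q => (if p.1 = q.1 then 1 else 0) * M (p.2.1, p.2.2) (q.2.1, q.2.2)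

/-- `R₁₂(λ; θ − η Σ_{i=1}^N σ^z_i)` on the two auxiliary spaces. -/
noncomputable def R12dynQ {N : ℕ} (η lam θ : ℂ) :
    Matrix (Fin 2 × Fin 2 × (Fin N → Fin 2)) (Fin 2 × Fin 2 × (Fin N → Fin 2)) ℂ :=
  Matrix.of fun p q =>
    (if p.2.2 = q.2.2 then 1 else 0) *
      Rmat η lam (θ - η * szSum Finset.univ q.2.2) (p.1, p.2.1) (q.1, q.2.1)

/-- `R₂₁(λ; θ − η Σ_{i=1}^N σ^z_i)` on the two auxiliary spaces. -/
noncomputable def R21dynQ {N : ℕ} (η lam θ : ℂ) :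
    Matrix (Fin 2 × Fin 2 × (Fin N → Fin 2)) (Fin 2 × Fin 2 × (Fin N → Fin 2)) ℂ :=
  Matrix.of fun p q =>
    (if p.2.2 = q.2.2 then 1 else 0) *
      Rmat η lam (θ - η * szSum Finset.univ q.2.2) (p.2.1, p.1) (q.2.1, q.1)

/-! ### Identities for matrix entries -/

/-- Rewriting with this lemma turns the addition-theorem identities for `sinh` into rational
identities in exponentials, which `field_simp` and `ring` decide. -/
lemma sinh_eq_exp (x : ℂ) : Complex.sinh x = (Complex.exp x - (Complex.exp x)⁻¹) / 2 := by
  rw [Complex.sinh, Complex.exp_neg]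

set_option maxHeartbeats 4000000 in
open Complex in
/-- The dynamical Yang-Baxter equation on `ℂ² ⊗ ℂ² ⊗ ℂ²`, entry by entry. -/
lemma dybe_core (η x y θ : ℂ) (h0 : sinh θ ≠ 0) (hp : sinh (θ + η) ≠ 0)
    (hm : sinh (θ - η) ≠ 0) (a b c a' b' c' : Fin 2) :
    ∑ k : Fin 2, ∑ l : Fin 2, ∑ m : Fin 2,
      Rmat η x (θ - η * szval c) (a, b) (k, l) * Rmat η (x + y) θ (k, c) (a', m) *
        Rmat η y (θ - η * szval a') (l, m) (b', c') =
    ∑ k : Fin 2, ∑ l : Fin 2, ∑ m : Fin 2,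
      Rmat η y θ (b, c) (l, m) * Rmat η (x + y) (θ - η * szval l) (a, m) (k, c') *
        Rmat η x θ (k, l) (a', b') := by
  have nx := exp_ne_zero x
  have ny := exp_ne_zero y
  have nη := exp_ne_zero η
  have nθ := exp_ne_zero θ
  fin_cases a <;> fin_cases b <;> fin_cases c <;> fin_cases a' <;> fin_cases b' <;>
    fin_cases c' <;>
  simp [Rmat, szval, Fin.sum_univ_two] <;>
  field_simp <;>
  simp only [sinh_eq_exp, exp_add, exp_sub] <;>
  field_simp <;> ring

set_option maxHeartbeats 4000000 in
open Complex in
/-- The reflection equation for the diagonal boundary matrix alone, entry by entry. -/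
lemma reflection_core (η ζ x y θ : ℂ) (h0 : sinh θ ≠ 0)
    (h1 : sinh (θ + ζ + x) ≠ 0) (h2 : sinh (ζ + x) ≠ 0)
    (h3 : sinh (θ + ζ + y) ≠ 0) (h4 : sinh (ζ + y) ≠ 0) (a b a' b' : Fin 2) :
    (∑ k : Fin 2, ∑ l : Fin 2,
      Rmat η (x - y) θ (a, b) (k, l) * Kmat ζ x θ k k * Rmat η (x + y) θ (l, k) (b', a')) *
        Kmat ζ y θ b' b' =
    ∑ k : Fin 2, ∑ l : Fin 2,
      Kmat ζ y θ b b * Rmat η (x + y) θ (a, b) (k, l) * Kmat ζ x θ k k *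
        Rmat η (x - y) θ (l, k) (b', a') := by
  have nx := exp_ne_zero x
  have ny := exp_ne_zero y
  have nη := exp_ne_zero η
  have nθ := exp_ne_zero θ
  have nζ := exp_ne_zero ζ
  fin_cases a <;> fin_cases b <;> fin_cases a' <;> fin_cases b' <;>
  simp [Rmat, Kmat, Fin.sum_univ_two] <;>
  field_simp <;>
  simp only [sinh_eq_exp, exp_add, exp_sub] <;>
  field_simp <;> ring

/-! ### The dynamical Yang-Baxter equation -/

/-- The ice rule. -/
lemma Rmat_ne_zero {η u θ : ℂ} {a b c d : Fin 2} (h : Rmat η u θ (a, b) (c, d) ≠ 0) :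
    szval a + szval b = szval c + szval d := by
  revert h
  fin_cases a <;> fin_cases b <;> fin_cases c <;> fin_cases d <;> simp [Rmat, szval]

/-- A relabelled copy of the dynamical R-matrix: on an index set `S` carrying spin coordinates
`x y z : S → Fin 2` and a remaining coordinate `t : S → Q`, the matrix acting as
`R(u; f z t)` on the spins `x` (first) and `y` (second), diagonally in `z` and `t`. -/
noncomputable def dynR {S Q : Type*} [DecidableEq Q] (η : ℂ) (x y z : S → Fin 2) (t : S → Q)
    (f : Fin 2 → Q → ℂ) (u : ℂ) : Matrix S S ℂ :=
  Matrix.of fun p q =>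
    if z p = z q ∧ t p = t q then Rmat η u (f (z q) (t q)) (x p, y p) (x q, y q) else 0

section Lifting

variable {S Q : Type*} [Fintype S] [Fintype Q] [DecidableEq Q]

/-- A row of `dynR` has support in the points with the same `z` and `t`, so that summing it
against a function of the coordinates leaves a sum over two spins. -/
lemma sum_dynR_mul (η u : ℂ) (x y z : S → Fin 2) (t : S → Q) (f : Fin 2 → Q → ℂ)
    (hb : Function.Bijective fun p => (x p, y p, z p, t p)) (p : S)
    (F : Fin 2 × Fin 2 × Fin 2 × Q → ℂ) :
    ∑ r, dynR η x y z t f u p r * F (x r, y r, z r, t r) =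
      ∑ k, ∑ l, Rmat η u (f (z p) (t p)) (x p, y p) (k, l) * F (k, l, z p, t p) := by
  have key := (Equiv.ofBijective _ hb).sum_comp (fun r : Fin 2 × Fin 2 × Fin 2 × Q =>
    (if z p = r.2.2.1 ∧ t p = r.2.2.2 then
      Rmat η u (f r.2.2.1 r.2.2.2) (x p, y p) (r.1, r.2.1) else 0) * F r)
  simp only [Equiv.ofBijective_apply] at key
  simp only [dynR, Matrix.of_apply]
  rw [key]
  simp [Fintype.sum_prod_type, ite_and]

/-- The dynamical Yang-Baxter equation for three spin coordinates `x y z` on an index set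
whose points are determined by `x y z` and a spectator coordinate `t`. -/
lemma dybe (η u v : ℂ) (x y z : S → Fin 2) (t : S → Q) (Θ : Q → ℂ)
    (hb : Function.Bijective fun p => (x p, y p, z p, t p))
    (h0 : ∀ q, Complex.sinh (Θ q) ≠ 0) (hp : ∀ q, Complex.sinh (Θ q + η) ≠ 0)
    (hm : ∀ q, Complex.sinh (Θ q - η) ≠ 0) :
    dynR η x y z t (fun s q => Θ q - η * szval s) u * dynR η x z y t (fun _ q => Θ q) (u + v) *
        dynR η y z x t (fun s q => Θ q - η * szval s) v =
      dynR η y z x t (fun _ q => Θ q) v *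
        dynR η x z y t (fun s q => Θ q - η * szval s) (u + v) *
        dynR η x y z t (fun _ q => Θ q) u := by
  have hb2 : Function.Bijective fun p => (x p, z p, y p, t p) := by
    let g : Fin 2 × Fin 2 × Fin 2 × Q ≃ Fin 2 × Fin 2 × Fin 2 × Q :=
      ⟨fun r => (r.1, r.2.2.1, r.2.1, r.2.2.2), fun r => (r.1, r.2.2.1, r.2.1, r.2.2.2),
        fun _ => rfl, fun _ => rfl⟩
    exact g.bijective.comp hb
  have hb3 : Function.Bijective fun p => (y p, z p, x p, t p) := by
    let g : Fin 2 × Fin 2 × Fin 2 × Q ≃ Fin 2 × Fin 2 × Fin 2 × Q :=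
      ⟨fun r => (r.2.1, r.2.2.1, r.1, r.2.2.2), fun r => (r.2.2.1, r.1, r.2.1, r.2.2.2),
        fun _ => rfl, fun _ => rfl⟩
    exact g.bijective.comp hb
  ext p q
  have core := dybe_core η u v (Θ (t p)) (h0 _) (hp _) (hm _) (x p) (y p) (z p) (x q) (y q) (z q)
  simp only [Matrix.mul_assoc, Matrix.mul_apply (M := dynR _ _ _ _ _ _ _)]
  -- Each row of an R-matrix is summed in turn, the summand being a function of the coordinates.
  have L2 : ∀ r, ∑ s, dynR η x z y t (fun _ q => Θ q) (u + v) r s *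
        dynR η y z x t (fun s q => Θ q - η * szval s) v s q =
      ∑ k, ∑ l, Rmat η (u + v) (Θ (t r)) (x r, z r) (k, l) *
        (if k = x q ∧ t r = t q then
          Rmat η v (Θ (t q) - η * szval (x q)) (y r, l) (y q, z q) else 0) := fun r =>
    sum_dynR_mul η (u + v) x z y t (fun _ q => Θ q) hb2 r (fun w =>
      if w.1 = x q ∧ w.2.2.2 = t q then
          Rmat η v (Θ (t q) - η * szval (x q)) (w.2.2.1, w.2.1) (y q, z q) else 0)
  have R2 : ∀ r, ∑ s, dynR η x z y t (fun s q => Θ q - η * szval s) (u + v) r s *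
        dynR η x y z t (fun _ q => Θ q) u s q =
      ∑ k, ∑ l, Rmat η (u + v) (Θ (t r) - η * szval (y r)) (x r, z r) (k, l) *
        (if l = z q ∧ t r = t q then
          Rmat η u (Θ (t q)) (k, y r) (x q, y q) else 0) := fun r =>
    sum_dynR_mul η (u + v) x z y t (fun s q => Θ q - η * szval s) hb2 r (fun w =>
      if w.2.1 = z q ∧ w.2.2.2 = t q then
          Rmat η u (Θ (t q)) (w.1, w.2.2.1) (x q, y q) else 0)
  simp only [L2, R2]
  rw [sum_dynR_mul η u x y z t _ hb p (fun w =>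
      ∑ k, ∑ l, Rmat η (u + v) (Θ w.2.2.2) (w.1, w.2.2.1) (k, l) *
        (if k = x q ∧ w.2.2.2 = t q then
          Rmat η v (Θ (t q) - η * szval (x q)) (w.2.1, l) (y q, z q) else 0)),
    sum_dynR_mul η v y z x t _ hb3 p (fun w =>
      ∑ k, ∑ l, Rmat η (u + v) (Θ w.2.2.2 - η * szval w.1) (w.2.2.1, w.2.1) (k, l) *
        (if l = z q ∧ w.2.2.2 = t q then
          Rmat η u (Θ (t q)) (k, w.1) (x q, y q) else 0))]
  by_cases h : t p = t q
  · simp only [h, and_true] at core ⊢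
    simp only [mul_ite, mul_zero, Fin.sum_univ_two] at core ⊢
    generalize x q = X at *
    generalize z q = Z at *
    fin_cases X <;> fin_cases Z <;> simp at core ⊢ <;> linear_combination core
  · simp [h]

/-- An operator on the spin `z` and the coordinate `t` that preserves `f` commutes with the
R-matrix on the two other spins whose dynamical parameter is `f`. -/
lemma commute_dynR (η u : ℂ) (x y z : S → Fin 2) (t : S → Q) (f : Fin 2 → Q → ℂ)
    (hb : Function.Bijective fun p => (x p, y p, z p, t p))
    (M : Matrix (Fin 2 × Q) (Fin 2 × Q) ℂ) (A : Matrix S S ℂ)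
    (hA : ∀ p q, A p q = if x p = x q ∧ y p = y q then M (z p, t p) (z q, t q) else 0)
    (hM : ∀ p q, M p q ≠ 0 → f p.1 p.2 = f q.1 q.2) :
    A * dynR η x y z t f u = dynR η x y z t f u * A := by
  ext p q
  have e1 : (dynR η x y z t f u * A) p q =
      Rmat η u (f (z p) (t p)) (x p, y p) (x q, y q) * M (z p, t p) (z q, t q) := by
    simp only [Matrix.mul_apply, hA]
    rw [sum_dynR_mul η u x y z t f hb p (fun w =>
      if w.1 = x q ∧ w.2.1 = y q then M (w.2.2.1, w.2.2.2) (z q, t q) else 0)]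
    simp [ite_and]
  have e2 : (A * dynR η x y z t f u) p q =
      M (z p, t p) (z q, t q) * Rmat η u (f (z q) (t q)) (x p, y p) (x q, y q) := by
    have key := (Equiv.ofBijective _ hb).sum_comp (fun r : Fin 2 × Fin 2 × Fin 2 × Q =>
      (if x p = r.1 ∧ y p = r.2.1 then M (z p, t p) (r.2.2.1, r.2.2.2) else 0) *
        (if r.2.2.1 = z q ∧ r.2.2.2 = t q then
          Rmat η u (f (z q) (t q)) (r.1, r.2.1) (x q, y q) else 0))
    simp only [Equiv.ofBijective_apply] at key
    simp only [Matrix.mul_apply, hA, dynR, Matrix.of_apply]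
    rw [key]
    simp [Fintype.sum_prod_type, ite_and]
  rw [e1, e2, mul_comm]
  by_cases h : M (z p, t p) (z q, t q) = 0
  · simp [h]
  · rw [hM _ _ h]

end Lifting

/-! ### Operators acting on some tensor factors -/

section Ampliation

variable {S A V : Type*} [DecidableEq A]

/-- The operator `1 ⊗ M` on an index set `S ≃ A × V` given by its coordinates `g` and `h`. -/
def ampl (g : S → A) (h : S → V) (M : Matrix V V ℂ) : Matrix S S ℂ :=
  Matrix.of fun p q => if g p = g q then M (h p) (h q) else 0

lemma ampl_mul [Fintype S] [Fintype A] [Fintype V] (g : S → A) (h : S → V)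
    (hb : Function.Bijective fun p => (g p, h p)) (M M' : Matrix V V ℂ) :
    ampl g h (M * M') = ampl g h M * ampl g h M' := by
  ext p q
  have key := (Equiv.ofBijective _ hb).sum_comp (fun r : A × V =>
    (if g p = r.1 then M (h p) r.2 else 0) * (if r.1 = g q then M' r.2 (h q) else 0))
  simp only [Equiv.ofBijective_apply] at key
  simp only [Matrix.mul_apply, ampl, Matrix.of_apply]
  rw [key]
  by_cases hpq : g p = g q <;> simp [Fintype.sum_prod_type, hpq]

lemma ampl_one [DecidableEq S] [DecidableEq V] (g : S → A) (h : S → V)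
    (hb : Function.Bijective fun p => (g p, h p)) : ampl g h 1 = 1 := by
  ext p q
  have : p = q ↔ g p = g q ∧ h p = h q := by
    rw [← hb.injective.eq_iff, Prod.mk.injEq]
  simp only [ampl, Matrix.of_apply, Matrix.one_apply, this, ite_and]

lemma ampl_list_prod [Fintype S] [Fintype A] [Fintype V] [DecidableEq S] [DecidableEq V]
    (g : S → A) (h : S → V) (hb : Function.Bijective fun p => (g p, h p))
    (L : List (Matrix V V ℂ)) : ampl g h L.prod = (L.map (ampl g h)).prod := by
  induction L with
  | nil => simp [ampl_one g h hb]
  | cons M L ih => simp [ampl_mul g h hb, ih]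

end Ampliation

/-! ### The monodromy matrix of a chain -/

section Chain

variable {n : ℕ}

/-- Extension of an operator on `ℂ²₀ ⊗ (ℂ²)^{⊗n}` by the identity on an additional quantum
factor placed in front of the chain. -/
noncomputable def liftT :
    Matrix (Fin 2 × (Fin n → Fin 2)) (Fin 2 × (Fin n → Fin 2)) ℂ →
      Matrix (Fin 2 × (Fin (n + 1) → Fin 2)) (Fin 2 × (Fin (n + 1) → Fin 2)) ℂ :=
  ampl (fun p => p.2 0) (fun p => (p.1, Fin.tail p.2))

/-- Extension of an operator on `ℂ²₁ ⊗ ℂ²₂ ⊗ (ℂ²)^{⊗n}` by the identity on an additional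
quantum factor placed in front of the chain. -/
noncomputable def liftS :
    Matrix (Fin 2 × Fin 2 × (Fin n → Fin 2)) (Fin 2 × Fin 2 × (Fin n → Fin 2)) ℂ →
      Matrix (Fin 2 × Fin 2 × (Fin (n + 1) → Fin 2))
        (Fin 2 × Fin 2 × (Fin (n + 1) → Fin 2)) ℂ :=
  ampl (fun p => p.2.2 0) (fun p => (p.1, p.2.1, Fin.tail p.2.2))

lemma bij_liftT : Function.Bijective fun p : Fin 2 × (Fin (n + 1) → Fin 2) =>
    (p.2 0, (p.1, Fin.tail p.2)) := by
  refine ⟨?_, fun r => ⟨(r.2.1, Fin.cons r.1 r.2.2), by simp⟩⟩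
  rintro ⟨a, s⟩ ⟨b, s'⟩ h
  simp only [Prod.mk.injEq] at h
  rw [← Fin.cons_self_tail s, ← Fin.cons_self_tail s', h.1, h.2.1, h.2.2]

lemma bij_coord (n : ℕ) : Function.Bijective fun p : Fin 2 × Fin 2 × (Fin (n + 1) → Fin 2) =>
    (p.1, p.2.1, p.2.2 0, Fin.tail p.2.2) := by
  refine ⟨?_, fun r => ⟨(r.1, r.2.1, Fin.cons r.2.2.1 r.2.2.2), by simp⟩⟩
  rintro ⟨a, b, s⟩ ⟨a', b', s'⟩ h
  simp only [Prod.mk.injEq] at h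
  rw [← Fin.cons_self_tail s, ← Fin.cons_self_tail s', h.1, h.2.1, h.2.2.1, h.2.2.2]

/-- A rearrangement of coordinates that admits an inverse rearrangement is bijective. -/
lemma bij_of_inverse {S X Y : Type*} {f : S → X} {g : S → Y} (hf : Function.Bijective f)
    (φ : X → Y) (ψ : Y → X) (h1 : ∀ x, ψ (φ x) = x) (h2 : ∀ y, φ (ψ y) = y)
    (hg : ∀ s, g s = φ (f s)) : Function.Bijective g := by
  have : g = φ ∘ f := funext hg
  rw [this]
  exact (⟨φ, ψ, h1, h2⟩ : X ≃ Y).bijective.comp hf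

lemma liftS_mul (M M' : Matrix (Fin 2 × Fin 2 × (Fin n → Fin 2)) _ ℂ) :
    liftS (M * M') = liftS M * liftS M' :=
  ampl_mul _ _ (bij_of_inverse (bij_coord n) (fun r => (r.2.2.1, (r.1, r.2.1, r.2.2.2)))
    (fun r => (r.2.1, r.2.2.1, r.1, r.2.2.2)) (fun _ => rfl) (fun _ => rfl) (fun _ => rfl)) M M'

lemma emb1_mul (M M' : Matrix (Fin 2 × (Fin n → Fin 2)) (Fin 2 × (Fin n → Fin 2)) ℂ) :
    emb1 (M * M') = emb1 M * emb1 M' := by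
  have h : ∀ M : Matrix (Fin 2 × (Fin n → Fin 2)) (Fin 2 × (Fin n → Fin 2)) ℂ,
      emb1 M = ampl (fun p => p.2.1) (fun p => (p.1, p.2.2)) M := by
    intro M; ext p q; simp [emb1, ampl]
  simp only [h]
  exact ampl_mul _ _ (bij_of_inverse (X := Fin 2 × Fin 2 × (Fin n → Fin 2))
    Function.bijective_id (fun r => (r.2.1, (r.1, r.2.2)))
    (fun r => (r.2.1, r.1, r.2.2)) (fun _ => rfl) (fun _ => rfl) (fun _ => rfl)) M M'

lemma emb2_mul (M M' : Matrix (Fin 2 × (Fin n → Fin 2)) (Fin 2 × (Fin n → Fin 2)) ℂ) :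
    emb2 (M * M') = emb2 M * emb2 M' := by
  have h : ∀ M : Matrix (Fin 2 × (Fin n → Fin 2)) (Fin 2 × (Fin n → Fin 2)) ℂ,
      emb2 M = ampl (fun p => p.1) (fun p => p.2) M := by
    intro M; ext p q; simp [emb2, ampl]
  simp only [h]
  exact ampl_mul _ _ Function.bijective_id M M'

lemma szSum_univ_succ (s : Fin (n + 1) → Fin 2) :
    szSum Finset.univ s = szval (s 0) + szSum Finset.univ (Fin.tail s) := by
  simp [szSum, Fin.sum_univ_succ, Fin.tail]

lemma szSum_filter_zero (s : Fin (n + 1) → Fin 2) :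
    szSum (Finset.univ.filter fun j => (0 : Fin (n + 1)) < j) s =
      szSum Finset.univ (Fin.tail s) := by
  simp [szSum, Finset.sum_filter, Fin.sum_univ_succ, Fin.tail]

lemma szSum_filter_succ (s : Fin (n + 1) → Fin 2) (i : Fin n) :
    szSum (Finset.univ.filter fun j => i.succ < j) s =
      szSum (Finset.univ.filter fun j => i < j) (Fin.tail s) := by
  simp [szSum, Finset.sum_filter, Fin.sum_univ_succ, Fin.tail]

lemma forall_ne_zero_iff (s s' : Fin (n + 1) → Fin 2) :
    (∀ j, j ≠ 0 → s j = s' j) ↔ Fin.tail s = Fin.tail s' := by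
  simp [Fin.forall_fin_succ, funext_iff, Fin.tail]

lemma forall_ne_succ_iff (s s' : Fin (n + 1) → Fin 2) (i : Fin n) :
    (∀ j, j ≠ i.succ → s j = s' j) ↔
      s 0 = s' 0 ∧ ∀ j, j ≠ i → Fin.tail s j = Fin.tail s' j := by
  simp [Fin.forall_fin_succ, Fin.tail, (Fin.succ_ne_zero i).symm]

lemma liftT_R0i (η u θ : ℂ) (i : Fin n) : liftT (R0i η u θ i) = R0i η u θ i.succ := by
  ext p q
  simp only [liftT, ampl, R0i, Matrix.of_apply, forall_ne_succ_iff, szSum_filter_succ, ite_and,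
    ite_mul, zero_mul]
  rfl

lemma liftT_Ri0 (η u θ : ℂ) (i : Fin n) : liftT (Ri0 η u θ i) = Ri0 η u θ i.succ := by
  ext p q
  simp only [liftT, ampl, Ri0, Matrix.of_apply, forall_ne_succ_iff, szSum_filter_succ, ite_and,
    ite_mul, zero_mul]
  rfl

lemma eq_iff_tail (s s' : Fin (n + 1) → Fin 2) :
    s = s' ↔ s 0 = s' 0 ∧ Fin.tail s = Fin.tail s' := by
  simp [Fin.forall_fin_succ, funext_iff, Fin.tail]

lemma liftT_K0emb (ζ u θ : ℂ) : liftT (n := n) (K0emb ζ u θ) = K0emb ζ u θ := by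
  ext p q
  simp only [liftT, ampl, K0emb, Matrix.of_apply, eq_iff_tail p.2, ite_and, ite_mul, zero_mul]

/-- The double-row monodromy matrix of a chain is obtained by dressing that of the chain
without its first site. -/
lemma Tcal_succ (η ζ : ℂ) (ξ : Fin (n + 1) → ℂ) (u θ : ℂ) :
    Tcal η ζ ξ u θ =
      R0i η (u - ξ 0) θ 0 * liftT (Tcal η ζ (Fin.tail ξ) u θ) * Ri0 η (u + ξ 0) θ 0 := by
  have hm : ∀ M M' : Matrix (Fin 2 × (Fin n → Fin 2)) (Fin 2 × (Fin n → Fin 2)) ℂ,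
      liftT (M * M') = liftT M * liftT M' := ampl_mul _ _ bij_liftT
  have hl : ∀ L : List (Matrix (Fin 2 × (Fin n → Fin 2)) (Fin 2 × (Fin n → Fin 2)) ℂ),
      liftT L.prod = (L.map liftT).prod := ampl_list_prod _ _ bij_liftT
  have hT : Tmat η ξ u θ = R0i η (u - ξ 0) θ 0 * liftT (Tmat η (Fin.tail ξ) u θ) := by
    rw [Tmat, Tmat, hl, List.map_ofFn, List.ofFn_succ, List.prod_cons]
    simp only [Function.comp_def, liftT_R0i, Fin.tail]
  have hT' : That η ξ u θ = liftT (That η (Fin.tail ξ) u θ) * Ri0 η (u + ξ 0) θ 0 := by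
    rw [That, That, hl, List.map_reverse, List.map_ofFn, List.ofFn_succ, List.reverse_cons,
      List.prod_append, List.prod_singleton]
    simp only [Function.comp_def, liftT_Ri0, Fin.tail]
  rw [Tcal, Tcal, hT, hT', hm, hm, liftT_K0emb]
  simp only [Matrix.mul_assoc]

lemma Tcal_zero (η ζ : ℂ) (ξ : Fin 0 → ℂ) (u θ : ℂ) : Tcal η ζ ξ u θ = K0emb ζ u θ := by
  simp [Tcal, Tmat, That]

/-- Conservation of the total spin `σ^z_0 + Σ σ^z_i`. -/
def PreservesSpin (M : Matrix (Fin 2 × (Fin n → Fin 2)) (Fin 2 × (Fin n → Fin 2)) ℂ) : Prop :=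
  ∀ p q, M p q ≠ 0 →
    szval p.1 + szSum Finset.univ p.2 = szval q.1 + szSum Finset.univ q.2

lemma PreservesSpin.mul {M M' : Matrix (Fin 2 × (Fin n → Fin 2)) (Fin 2 × (Fin n → Fin 2)) ℂ}
    (h : PreservesSpin M) (h' : PreservesSpin M') : PreservesSpin (M * M') := by
  intro p q hpq
  obtain ⟨r, -, hr⟩ := Finset.exists_ne_zero_of_sum_ne_zero (by simpa [Matrix.mul_apply] using hpq)
  exact (h p r (left_ne_zero_of_mul hr)).trans (h' r q (right_ne_zero_of_mul hr))

lemma preservesSpin_Tcal (η ζ : ℂ) (ξ : Fin n → ℂ) (u θ : ℂ) :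
    PreservesSpin (Tcal η ζ ξ u θ) := by
  induction n with
  | zero =>
    rw [Tcal_zero]
    rintro ⟨a, s⟩ ⟨b, s'⟩ h
    obtain rfl : s = s' := Subsingleton.elim _ _
    revert h
    fin_cases a <;> fin_cases b <;> simp [K0emb, Kmat]
  | succ n ih =>
    rw [Tcal_succ]
    refine (PreservesSpin.mul ?_ ?_).mul ?_
    · intro p q h
      simp only [R0i, Matrix.of_apply, forall_ne_zero_iff, ite_mul, one_mul, zero_mul, ne_eq,
        ite_eq_right_iff, Classical.not_imp] at h
      rw [szSum_univ_succ, szSum_univ_succ, h.1, ← add_assoc, ← add_assoc, Rmat_ne_zero h.2]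
    · intro p q h
      simp only [liftT, ampl, Matrix.of_apply, ne_eq, ite_eq_right_iff, Classical.not_imp] at h
      have := ih (Fin.tail ξ) _ _ h.2
      rw [szSum_univ_succ, szSum_univ_succ, h.1]
      linear_combination this
    · intro p q h
      simp only [Ri0, Matrix.of_apply, forall_ne_zero_iff, ite_mul, one_mul, zero_mul, ne_eq,
        ite_eq_right_iff, Classical.not_imp] at h
      rw [szSum_univ_succ, szSum_univ_succ, h.1]
      linear_combination Rmat_ne_zero h.2

lemma szSum_eq_intCast (s : Fin n → Fin 2) :
    ∃ k : ℤ, |k| ≤ n ∧ szSum Finset.univ s = k := by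
  induction n with
  | zero => exact ⟨0, by simp [szSum]⟩
  | succ n ih =>
    obtain ⟨k, hk, hs⟩ := ih (Fin.tail s)
    rw [szSum_univ_succ, hs]
    by_cases h : s 0 = 0
    · exact ⟨1 + k, by push_cast; grind, by simp [szval, h]⟩
    · exact ⟨-1 + k, by push_cast; grind, by simp [szval, h]⟩

end Chain

/-! ### Dressing -/

/-- The dressing argument in a noncommutative monoid: `X`, `Y` solve the reflection equation
with the primed R-matrices, and the Yang-Baxter equations `y1`-`y4` and the commutations
`cX`-`cY'` transport it to `b₁ X c₁`, `b₂ Y c₂`. -/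
lemma dressing {G : Type*} [Monoid G] {X Y a₁₂ a₂₁ m₁₂ m₂₁ a₁₂' a₂₁' m₁₂' m₂₁' b₁ b₂ c₁ c₂ b₁' b₂'
      c₁' c₂' : G}
    (re : a₁₂' * X * m₂₁' * Y = Y * m₁₂' * X * a₂₁')
    (y1 : b₂' * m₂₁' * c₁' = c₁ * m₂₁ * b₂) (y2 : a₁₂ * b₁ * b₂' = b₂ * b₁' * a₁₂')
    (y3 : c₂' * c₁ * a₂₁ = a₂₁' * c₁' * c₂) (y4 : b₁' * m₁₂' * c₂' = c₂ * m₁₂ * b₁)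
    (cX : X * b₂' = b₂' * X) (cX' : X * c₂' = c₂' * X)
    (cY : Y * b₁' = b₁' * Y) (cY' : Y * c₁' = c₁' * Y) :
    a₁₂ * (b₁ * X * c₁) * m₂₁ * (b₂ * Y * c₂) = b₂ * Y * c₂ * m₁₂ * (b₁ * X * c₁) * a₂₁ := by
  calc a₁₂ * (b₁ * X * c₁) * m₂₁ * (b₂ * Y * c₂)
      = a₁₂ * b₁ * X * (c₁ * m₂₁ * b₂) * Y * c₂ := by simp only [mul_assoc]
    _ = a₁₂ * b₁ * (X * b₂') * m₂₁' * (c₁' * Y) * c₂ := by rw [← y1]; simp only [mul_assoc]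
    _ = (a₁₂ * b₁ * b₂') * X * m₂₁' * Y * c₁' * c₂ := by rw [cX, ← cY']; simp only [mul_assoc]
    _ = b₂ * b₁' * (a₁₂' * X * m₂₁' * Y) * c₁' * c₂ := by rw [y2]; simp only [mul_assoc]
    _ = b₂ * b₁' * Y * m₁₂' * X * (a₂₁' * c₁' * c₂) := by rw [re]; simp only [mul_assoc]
    _ = b₂ * (b₁' * Y) * m₁₂' * (X * c₂') * c₁ * a₂₁ := by rw [← y3]; simp only [mul_assoc]
    _ = b₂ * Y * (b₁' * m₁₂' * c₂') * X * c₁ * a₂₁ := by rw [← cY, cX']; simp only [mul_assoc]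
    _ = b₂ * Y * c₂ * m₁₂ * (b₁ * X * c₁) * a₂₁ := by rw [y4]; simp only [mul_assoc]

/-- The reflection equation for the empty chain, where `𝒯` is the boundary matrix. -/
lemma reflection_zero (η ζ : ℂ) (ξ : Fin 0 → ℂ) (lam1 lam2 θ : ℂ) (h0 : Complex.sinh θ ≠ 0)
    (h1 : Complex.sinh (θ + ζ + lam1) ≠ 0) (h2 : Complex.sinh (ζ + lam1) ≠ 0)
    (h3 : Complex.sinh (θ + ζ + lam2) ≠ 0) (h4 : Complex.sinh (ζ + lam2) ≠ 0) :
    R12dynQ η (lam1 - lam2) θ * emb1 (Tcal η ζ ξ lam1 θ) * R21dynQ η (lam1 + lam2) θ *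
        emb2 (Tcal η ζ ξ lam2 θ) =
      emb2 (Tcal η ζ ξ lam2 θ) * R12dynQ η (lam1 + lam2) θ * emb1 (Tcal η ζ ξ lam1 θ) *
        R21dynQ η (lam1 - lam2) θ := by
  have hK : ∀ (u : ℂ) (a b : Fin 2), a ≠ b → Kmat ζ u θ a b = 0 := by
    intro u a b
    fin_cases a <;> fin_cases b <;> simp [Kmat]
  have e1 : emb1 (Tcal η ζ ξ lam1 θ) = Matrix.diagonal fun p => Kmat ζ lam1 θ p.1 p.1 := by
    rw [Tcal_zero]
    ext ⟨a, b, s⟩ ⟨a', b', s'⟩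
    obtain rfl : s = s' := Subsingleton.elim _ _
    by_cases h : a = a' <;> by_cases h' : b = b' <;> simp [emb1, K0emb, h, h', hK]
  have e2 : emb2 (Tcal η ζ ξ lam2 θ) = Matrix.diagonal fun p => Kmat ζ lam2 θ p.2.1 p.2.1 := by
    rw [Tcal_zero]
    ext ⟨a, b, s⟩ ⟨a', b', s'⟩
    obtain rfl : s = s' := Subsingleton.elim _ _
    by_cases h : a = a' <;> by_cases h' : b = b' <;> simp [emb2, K0emb, h, h', hK]
  rw [e1, e2]
  ext ⟨a, b, s⟩ ⟨a', b', s'⟩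
  obtain rfl : s = s' := Subsingleton.elim _ _
  have hs : ∀ v w : Fin 0 → Fin 2, (v = w) = True := fun v w => eq_true (Subsingleton.elim v w)
  have := reflection_core η ζ lam1 lam2 θ h0 h1 h2 h3 h4 a b a' b'
  rw [Matrix.mul_diagonal, Matrix.mul_apply, Matrix.mul_apply]
  simpa [Matrix.mul_diagonal, Matrix.diagonal_mul, Fintype.sum_prod_type, R12dynQ, R21dynQ, szSum,
    hs] using this

/-- Adding a site in front of the chain preserves the reflection equation. Here `f0` and `f1`
are the dynamical parameters `Θ = θ - η Σ_{i ≥ 2} σ^z_i` and `Θ - η σ^z`, with `σ^z` that of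
the one spin among `1`, `2`, `a` (the first site) on which the R-matrix does not act. -/
lemma reflection_succ {n : ℕ} (η ζ : ℂ) (ξ : Fin (n + 1) → ℂ) (lam1 lam2 θ : ℂ)
    (hθ : ∀ k : ℤ, |k| ≤ (n : ℤ) + 1 → Complex.sinh (θ + (k : ℂ) * η) ≠ 0)
    (ih : R12dynQ η (lam1 - lam2) θ * emb1 (Tcal η ζ (Fin.tail ξ) lam1 θ) *
        R21dynQ η (lam1 + lam2) θ * emb2 (Tcal η ζ (Fin.tail ξ) lam2 θ) =
      emb2 (Tcal η ζ (Fin.tail ξ) lam2 θ) * R12dynQ η (lam1 + lam2) θ *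
        emb1 (Tcal η ζ (Fin.tail ξ) lam1 θ) * R21dynQ η (lam1 - lam2) θ) :
    R12dynQ η (lam1 - lam2) θ * emb1 (Tcal η ζ ξ lam1 θ) * R21dynQ η (lam1 + lam2) θ *
        emb2 (Tcal η ζ ξ lam2 θ) =
      emb2 (Tcal η ζ ξ lam2 θ) * R12dynQ η (lam1 + lam2) θ * emb1 (Tcal η ζ ξ lam1 θ) *
        R21dynQ η (lam1 - lam2) θ := by
  -- Spin coordinates of the auxiliary spaces and the first site, and the rest of the chain.
  let s1 : Fin 2 × Fin 2 × (Fin (n + 1) → Fin 2) → Fin 2 := fun p => p.1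
  let s2 : Fin 2 × Fin 2 × (Fin (n + 1) → Fin 2) → Fin 2 := fun p => p.2.1
  let sa : Fin 2 × Fin 2 × (Fin (n + 1) → Fin 2) → Fin 2 := fun p => p.2.2 0
  let t : Fin 2 × Fin 2 × (Fin (n + 1) → Fin 2) → (Fin n → Fin 2) := fun p => Fin.tail p.2.2
  let Θ : (Fin n → Fin 2) → ℂ := fun q => θ - η * szSum Finset.univ q
  let f0 : Fin 2 → (Fin n → Fin 2) → ℂ := fun _ q => Θ q
  let f1 : Fin 2 → (Fin n → Fin 2) → ℂ := fun s q => Θ q - η * szval s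
  have h0 : ∀ q, Complex.sinh (Θ q) ≠ 0 := by
    intro q
    obtain ⟨k, hk, hs⟩ := szSum_eq_intCast q
    convert hθ (-k) (by grind) using 2
    simp only [Θ, hs]; push_cast; ring
  have hp : ∀ q, Complex.sinh (Θ q + η) ≠ 0 := by
    intro q
    obtain ⟨k, hk, hs⟩ := szSum_eq_intCast q
    convert hθ (-k + 1) (by grind) using 2
    simp only [Θ, hs]; push_cast; ring
  have hm : ∀ q, Complex.sinh (Θ q - η) ≠ 0 := by
    intro q
    obtain ⟨k, hk, hs⟩ := szSum_eq_intCast q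
    convert hθ (-k - 1) (by grind) using 2
    simp only [Θ, hs]; push_cast; ring
  have B12a : Function.Bijective fun p => (s1 p, s2 p, sa p, t p) := bij_coord n
  have B2a1 : Function.Bijective fun p => (s2 p, sa p, s1 p, t p) :=
    bij_of_inverse B12a (fun r => (r.2.1, r.2.2.1, r.1, r.2.2.2))
      (fun r => (r.2.2.1, r.1, r.2.1, r.2.2.2)) (fun _ => rfl) (fun _ => rfl) (fun _ => rfl)
  have Ba21 : Function.Bijective fun p => (sa p, s2 p, s1 p, t p) :=
    bij_of_inverse B12a (fun r => (r.2.2.1, r.2.1, r.1, r.2.2.2))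
      (fun r => (r.2.2.1, r.2.1, r.1, r.2.2.2)) (fun _ => rfl) (fun _ => rfl) (fun _ => rfl)
  have B1a2 : Function.Bijective fun p => (s1 p, sa p, s2 p, t p) :=
    bij_of_inverse B12a (fun r => (r.1, r.2.2.1, r.2.1, r.2.2.2))
      (fun r => (r.1, r.2.2.1, r.2.1, r.2.2.2)) (fun _ => rfl) (fun _ => rfl) (fun _ => rfl)
  have Ba12 : Function.Bijective fun p => (sa p, s1 p, s2 p, t p) :=
    bij_of_inverse B12a (fun r => (r.2.2.1, r.1, r.2.1, r.2.2.2))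
      (fun r => (r.2.1, r.2.2.1, r.1, r.2.2.2)) (fun _ => rfl) (fun _ => rfl) (fun _ => rfl)
  -- The factors of both sides as relabelled R-matrices.
  have E12 : ∀ u, R12dynQ η u θ = dynR η s1 s2 sa t f1 u := by
    intro u; ext p q
    simp only [R12dynQ, dynR, Matrix.of_apply, s1, s2, sa, t, f1, Θ, eq_iff_tail p.2.2,
      szSum_univ_succ, ite_mul, one_mul, zero_mul]
    congr 2; ring
  have E21 : ∀ u, R21dynQ η u θ = dynR η s2 s1 sa t f1 u := by
    intro u; ext p q
    simp only [R21dynQ, dynR, Matrix.of_apply, s1, s2, sa, t, f1, Θ, eq_iff_tail p.2.2,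
      szSum_univ_succ, ite_mul, one_mul, zero_mul]
    congr 2; ring
  have L12 : ∀ u, liftS (R12dynQ η u θ) = dynR η s1 s2 sa t f0 u := by
    intro u; ext p q
    simp only [liftS, ampl, R12dynQ, dynR, Matrix.of_apply, s1, s2, sa, t, f0, Θ,
      ite_and, ite_mul, one_mul, zero_mul]
  have L21 : ∀ u, liftS (R21dynQ η u θ) = dynR η s2 s1 sa t f0 u := by
    intro u; ext p q
    simp only [liftS, ampl, R21dynQ, dynR, Matrix.of_apply, s1, s2, sa, t, f0, Θ,
      ite_and, ite_mul, one_mul, zero_mul]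
  have E1a : ∀ u, emb1 (R0i η u θ (0 : Fin (n + 1))) = dynR η s1 sa s2 t f0 u := by
    intro u; ext p q
    simp only [emb1, R0i, dynR, Matrix.of_apply, s1, s2, sa, t, f0, Θ, forall_ne_zero_iff,
      szSum_filter_zero, ite_and, ite_mul, one_mul, zero_mul]
  have E2a : ∀ u, emb2 (R0i η u θ (0 : Fin (n + 1))) = dynR η s2 sa s1 t f0 u := by
    intro u; ext p q
    simp only [emb2, R0i, dynR, Matrix.of_apply, s1, s2, sa, t, f0, Θ, forall_ne_zero_iff,
      szSum_filter_zero, ite_and, ite_mul, one_mul, zero_mul]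
  have Ea1 : ∀ u, emb1 (Ri0 η u θ (0 : Fin (n + 1))) = dynR η sa s1 s2 t f0 u := by
    intro u; ext p q
    simp only [emb1, Ri0, dynR, Matrix.of_apply, s1, s2, sa, t, f0, Θ, forall_ne_zero_iff,
      szSum_filter_zero, ite_and, ite_mul, one_mul, zero_mul]
  have Ea2 : ∀ u, emb2 (Ri0 η u θ (0 : Fin (n + 1))) = dynR η sa s2 s1 t f0 u := by
    intro u; ext p q
    simp only [emb2, Ri0, dynR, Matrix.of_apply, s1, s2, sa, t, f0, Θ, forall_ne_zero_iff,
      szSum_filter_zero, ite_and, ite_mul, one_mul, zero_mul]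
  set X := emb1 (liftT (Tcal η ζ (Fin.tail ξ) lam1 θ)) with hX
  set Y := emb2 (liftT (Tcal η ζ (Fin.tail ξ) lam2 θ)) with hY
  have LX : liftS (emb1 (Tcal η ζ (Fin.tail ξ) lam1 θ)) = X := by
    ext p q
    simp only [hX, liftS, liftT, ampl, emb1, Matrix.of_apply, ite_mul, one_mul, zero_mul]
    split_ifs <;> rfl
  have LY : liftS (emb2 (Tcal η ζ (Fin.tail ξ) lam2 θ)) = Y := by
    ext p q
    simp only [hY, liftS, liftT, ampl, emb2, Matrix.of_apply, ite_mul, one_mul, zero_mul]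
    split_ifs <;> rfl
  have hXe : ∀ p q, X p q = if s2 p = s2 q ∧ sa p = sa q then
      Tcal η ζ (Fin.tail ξ) lam1 θ (s1 p, t p) (s1 q, t q) else 0 := by
    intro p q
    simp only [hX, liftT, ampl, emb1, Matrix.of_apply, ite_mul, one_mul, zero_mul, ite_and,
      s1, s2, sa, t]
  have hYe : ∀ p q, Y p q = if s1 p = s1 q ∧ sa p = sa q then
      Tcal η ζ (Fin.tail ξ) lam2 θ (s2 p, t p) (s2 q, t q) else 0 := by
    intro p q
    simp only [hY, liftT, ampl, emb2, Matrix.of_apply, ite_mul, one_mul, zero_mul, ite_and,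
      s1, s2, sa, t]
  have hspin : ∀ u p q, Tcal η ζ (Fin.tail ξ) u θ p q ≠ 0 → f1 p.1 p.2 = f1 q.1 q.2 := by
    intro u p q h
    have := preservesSpin_Tcal _ _ _ _ _ p q h
    simp only [f1, Θ]
    linear_combination -η * this
  have re := congrArg liftS ih
  simp only [liftS_mul, L12, L21, LX, LY] at re
  have y1 := dybe η (lam2 - ξ 0) (lam1 + ξ 0) s2 sa s1 t Θ B2a1 h0 hp hm
  have y2 := dybe η (lam1 - lam2) (lam2 - ξ 0) s1 s2 sa t Θ B12a h0 hp hm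
  have y3 := dybe η (lam2 + ξ 0) (lam1 - lam2) sa s2 s1 t Θ Ba21 h0 hp hm
  have y4 := dybe η (lam1 - ξ 0) (lam2 + ξ 0) s1 sa s2 t Θ B1a2 h0 hp hm
  rw [show lam2 - ξ 0 + (lam1 + ξ 0) = lam1 + lam2 by ring] at y1
  rw [show lam1 - lam2 + (lam2 - ξ 0) = lam1 - ξ 0 by ring] at y2
  rw [show lam2 + ξ 0 + (lam1 - lam2) = lam1 + ξ 0 by ring] at y3
  rw [show lam1 - ξ 0 + (lam2 + ξ 0) = lam1 + lam2 by ring] at y4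
  rw [Tcal_succ, Tcal_succ, emb1_mul, emb1_mul, emb2_mul, emb2_mul, E1a, E2a, Ea1, Ea2,
    E12, E12, E21, E21, ← hX, ← hY]
  have hXe' : ∀ p q, X p q = if sa p = sa q ∧ s2 p = s2 q then
      Tcal η ζ (Fin.tail ξ) lam1 θ (s1 p, t p) (s1 q, t q) else 0 := by
    intro p q; rw [hXe]; simp only [and_comm]
  have hYe' : ∀ p q, Y p q = if sa p = sa q ∧ s1 p = s1 q then
      Tcal η ζ (Fin.tail ξ) lam2 θ (s2 p, t p) (s2 q, t q) else 0 := by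
    intro p q; rw [hYe]; simp only [and_comm]
  exact dressing re y1 y2 y3 y4
    (commute_dynR η _ s2 sa s1 t f1 B2a1 _ X hXe (hspin lam1))
    (commute_dynR η _ sa s2 s1 t f1 Ba21 _ X hXe' (hspin lam1))
    (commute_dynR η _ s1 sa s2 t f1 B1a2 _ Y hYe (hspin lam2))
    (commute_dynR η _ sa s1 s2 t f1 Ba12 _ Y hYe' (hspin lam2))

/-- The dynamical reflection equation for the double-row monodromy matrix. -/
theorem dynamical_reflection_equation (η ζ : ℂ) (N : ℕ) (hN : 1 ≤ N) (ξ : Fin N → ℂ)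
    (lam1 lam2 θ : ℂ)
    (hθ : ∀ k : ℤ, |k| ≤ (N : ℤ) + 1 → Complex.sinh (θ + (k : ℂ) * η) ≠ 0)
    (h1 : Complex.sinh (θ + ζ + lam1) ≠ 0) (h2 : Complex.sinh (ζ + lam1) ≠ 0)
    (h3 : Complex.sinh (θ + ζ + lam2) ≠ 0) (h4 : Complex.sinh (ζ + lam2) ≠ 0) :
    R12dynQ η (lam1 - lam2) θ * emb1 (Tcal η ζ ξ lam1 θ) * R21dynQ η (lam1 + lam2) θ *
        emb2 (Tcal η ζ ξ lam2 θ) =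
      emb2 (Tcal η ζ ξ lam2 θ) * R12dynQ η (lam1 + lam2) θ * emb1 (Tcal η ζ ξ lam1 θ) *
        R21dynQ η (lam1 - lam2) θ := by
  clear hN
  induction N with
  | zero => exact reflection_zero η ζ ξ lam1 lam2 θ (by simpa using hθ 0 (by simp)) h1 h2 h3 h4
  | succ n ih =>
    refine reflection_succ η ζ ξ lam1 lam2 θ (fun k hk => hθ k (by push_cast; omega)) ?_
    exact ih _ fun k hk => hθ k (by push_cast; omega)
end

section
/- The operators ℬ of the double-row monodromy matrix commute: for all λ₁, λ₂, θ ∈ ℂ (generic, so that all denominators occurring in R and K are nonzero), ℬ(λ₁;θ) ℬ(λ₂;θ) = ℬ(λ₂;θ) ℬ(λ₁;θ) as operators on (ℂ²)^{⊗N}. -/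
/-!
The operators `ℬ` commute because the double-row monodromy matrix satisfies the dynamical reflection
equation. With two auxiliary lines `1, 2` and `S` the total quantum spin, it reads

`R₁₂(λ₁-λ₂; θ-ηS) 𝒯₁(λ₁) R₂₁(λ₁+λ₂; θ-ηS) 𝒯₂(λ₂)
  = 𝒯₂(λ₂) R₁₂(λ₁+λ₂; θ-ηS) 𝒯₁(λ₁) R₂₁(λ₁-λ₂; θ-ηS)`.

For no quantum site this is the reflection equation for `K` (`refl_entry`). One quantum site `q` is
added by `𝒯 ↦ R_{0q} 𝒯 R_{q0}`: four instances of the dynamical Yang–Baxter equation (`dybe_entry`,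
`Rop_dybe`) and the conservation of spin carry the equation over (`dressing_step`, `dressed_refl`).
To treat all operators on the same footing, they act on the spins of one set of sites,
consisting of the two auxiliary and the `N` quantum sites, each `R` carrying its pair of sites and
the set of sites whose spin shifts `θ`.

The component of the reflection equation from both auxiliary spins down to both up is
`sinh(λ₁-λ₂+η) ℬ(λ₁) f(S) ℬ(λ₂) = sinh(λ₁-λ₂+η) ℬ(λ₂) f(S) ℬ(λ₁)` with
`f(S) = sinh(λ₁+λ₂) sinh(θ-ηS-η) / sinh(θ-ηS)` (`B_exchange`). Since `ℬ` changes `S` by a fixed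
amount, `f(S)` is a nonzero constant in each row and cancels when `sinh(λ₁-λ₂+η) sinh(λ₁+λ₂) ≠ 0`.
The excluded values of `λ₁` are isolated and `ℬ` is continuous in `λ₁`, so they follow by a limit.
-/

open Matrix

/-- The operator `ℬ(λ;θ)` on `(ℂ²)^{⊗N}`: the upper-right block of the double-row
monodromy matrix with respect to the auxiliary space (`0` = `+`, `1` = `-`). -/
noncomputable def Bop {N : ℕ} (η ζ : ℂ) (ξ : Fin N → ℂ) (lam θ : ℂ) :
    Matrix (Fin N → Fin 2) (Fin N → Fin 2) ℂ :=
  Matrix.of fun s t => Tcal η ζ ξ lam θ (0, s) (1, t)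

/-! ### Entrywise identities for `R` and `K` -/

section Entries
variable (η u d : ℂ)
theorem Rmat_pp : Rmat η u d (0, 0) (0, 0) = Complex.sinh (u + η) := by simp [Rmat]
theorem Rmat_mm : Rmat η u d (1, 1) (1, 1) = Complex.sinh (u + η) := by simp [Rmat]
theorem Rmat_pm : Rmat η u d (0, 1) (0, 1) =
    Complex.sinh u * Complex.sinh (d - η) / Complex.sinh d := by simp [Rmat]
theorem Rmat_mp : Rmat η u d (1, 0) (1, 0) =
    Complex.sinh u * Complex.sinh (d + η) / Complex.sinh d := by simp [Rmat]
theorem Rmat_pm_mp : Rmat η u d (0, 1) (1, 0) =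
    Complex.sinh η * Complex.sinh (d - u) / Complex.sinh d := by simp [Rmat]
theorem Rmat_mp_pm : Rmat η u d (1, 0) (0, 1) =
    Complex.sinh η * Complex.sinh (d + u) / Complex.sinh d := by simp [Rmat]
end Entries

/-- The ice rule: `R` conserves the total spin of its two factors. -/
theorem Rmat_eq_zero (η u d : ℂ) (a b c e : Fin 2) (h : szval a + szval b ≠ szval c + szval e) :
    Rmat η u d (a, b) (c, e) = 0 := by
  fin_cases a <;> fin_cases b <;> fin_cases c <;> fin_cases e <;> simp [Rmat, szval] at h ⊢

set_option maxHeartbeats 4000000 in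
/-- The dynamical Yang–Baxter equation on `ℂ² ⊗ ℂ² ⊗ ℂ²`, entry by entry. The shift of `d` by
the spin of the spectator factor uses its value at that stage of the product. -/
theorem dybe_entry (η u v d : ℂ) (h0 : Complex.sinh d ≠ 0) (hm : Complex.sinh (d - η) ≠ 0)
    (hp : Complex.sinh (d + η) ≠ 0) (x₀ x₁ x₂ y₀ y₁ y₂ : Fin 2) :
    ∑ p, ∑ q, ∑ r, Rmat η u (d - η * szval x₂) (x₀, x₁) (p, q) *
        Rmat η (u + v) d (p, x₂) (y₀, r) * Rmat η v (d - η * szval y₀) (q, r) (y₁, y₂) =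
      ∑ p, ∑ q, ∑ r, Rmat η v d (x₁, x₂) (q, r) *
        Rmat η (u + v) (d - η * szval q) (x₀, r) (p, y₂) * Rmat η u d (p, q) (y₀, y₁) := by
  have e1 : d - η * 1 = d - η := by ring
  have e2 : d - η * (-1) = d + η := by ring
  fin_cases x₀ <;> fin_cases x₁ <;> fin_cases x₂ <;> fin_cases y₀ <;> fin_cases y₁ <;>
    fin_cases y₂ <;> simp [Fin.sum_univ_two, Rmat, szval, e1, e2] <;> field_simp <;> 
    simp only [Complex.sinh, Complex.exp_add, Complex.exp_sub, Complex.exp_neg, neg_add, neg_sub] <;>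
    -- In terms of the exponentials both sides are rational functions.
    (have := Complex.exp_ne_zero u; have := Complex.exp_ne_zero v; have := Complex.exp_ne_zero d
     have := Complex.exp_ne_zero η; clear h0 hm hp e1 e2
     generalize Complex.exp u = a at *; generalize Complex.exp v = b at *
     generalize Complex.exp η = c at *; generalize Complex.exp d = e at *
     field_simp; ring)

set_option maxHeartbeats 1000000 in
/-- The reflection equation `R₁₂ K₁ R₂₁ K₂ = K₂ R₁₂ K₁ R₂₁` for the diagonal matrix `K`, entry by
entry. Here `R₂₁` takes the second factor first, hence the swapped pairs. -/
theorem refl_entry (η ζ l₁ l₂ d : ℂ) (h0 : Complex.sinh d ≠ 0) 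
    (h1 : Complex.sinh (d + ζ + l₁) ≠ 0) (h2 : Complex.sinh (ζ + l₁) ≠ 0)
    (h3 : Complex.sinh (d + ζ + l₂) ≠ 0) (h4 : Complex.sinh (ζ + l₂) ≠ 0)
    (x₁ x₂ y₁ y₂ : Fin 2) :
    ∑ p, ∑ q, Rmat η (l₁ - l₂) d (x₁, x₂) (p, q) * Kmat ζ l₁ d p p *
        Rmat η (l₁ + l₂) d (q, p) (y₂, y₁) * Kmat ζ l₂ d y₂ y₂ =
      ∑ p, ∑ q, Kmat ζ l₂ d x₂ x₂ * Rmat η (l₁ + l₂) d (x₁, x₂) (p, q) * Kmat ζ l₁ d p p *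
        Rmat η (l₁ - l₂) d (q, p) (y₂, y₁) := by
  fin_cases x₁ <;> fin_cases x₂ <;> fin_cases y₁ <;>
    fin_cases y₂ <;> simp [Fin.sum_univ_two, Rmat, Kmat] <;> field_simp <;> 
    simp only [Complex.sinh, Complex.exp_add, Complex.exp_sub, Complex.exp_neg, neg_add, neg_sub] <;>
    -- In terms of the exponentials both sides are rational functions.
    (have := Complex.exp_ne_zero l₁; have := Complex.exp_ne_zero l₂; have := Complex.exp_ne_zero d
     have := Complex.exp_ne_zero η; have := Complex.exp_ne_zero ζ; clear h0 h1 h2 h3 h4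
     generalize Complex.exp l₁ = a at *; generalize Complex.exp l₂ = b at *
     generalize Complex.exp η = c at *; generalize Complex.exp d = e at *
     generalize Complex.exp ζ = f at *
     field_simp; ring)

/-! ### The dynamical Yang–Baxter and reflection equations on a spin lattice -/

section Lattice

variable {ι : Type*}

/-- The eigenvalue of `Σ_{c ∈ S} σ^z_c` on the configuration `x`, for sites in any type. -/
noncomputable def siteSpin (S : Finset ι) (x : ι → Fin 2) : ℂ := ∑ j ∈ S, szval (x j)

theorem siteSpin_congr {S : Finset ι} {x y : ι → Fin 2} (h : ∀ l ∈ S, x l = y l) :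
    siteSpin S x = siteSpin S y :=
  Finset.sum_congr rfl fun l hl => by rw [h l hl]

variable [DecidableEq ι]

theorem siteSpin_update {S : Finset ι} {i : ι} (hi : i ∉ S) (x : ι → Fin 2) (a : Fin 2) :
    siteSpin S (Function.update x i a) = siteSpin S x :=
  siteSpin_congr fun l hl => Function.update_of_ne (fun h : l = i => hi (h ▸ hl)) _ _

theorem siteSpin_insert {S : Finset ι} {i : ι} (hi : i ∉ S) (x : ι → Fin 2) :
    siteSpin (insert i S) x = szval (x i) + siteSpin S x :=
  Finset.sum_insert hi

theorem exists_siteSpin_eq (S : Finset ι) (x : ι → Fin 2) :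
    ∃ k : ℤ, |k| ≤ (S.card : ℤ) ∧ siteSpin S x = k := by
  induction S using Finset.induction_on with
  | empty => exact ⟨0, by simp, by simp [siteSpin]⟩
  | insert i S hi ih =>
    obtain ⟨k, hk, e⟩ := ih
    rw [abs_le] at hk
    rw [siteSpin_insert hi, Finset.card_insert_of_notMem hi, e]
    by_cases hx : x i = 0
    · refine ⟨1 + k, ?_, by simp [szval, hx]⟩
      rw [abs_le]; push_cast; constructor <;> omega
    · refine ⟨-1 + k, ?_, by simp [szval, hx]⟩
      rw [abs_le]; push_cast; constructor <;> omega

variable [Fintype ι]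

/-- `R_{ij}(u; θ − η Σ_{c ∈ S} σ^z_c)` acting on the spins at all sites of `ι`, the factor at `i`
first and the factor at `j` second. The shift is read off the column index `y`; for `i, j ∉ S` it is
the same for the row index. -/
noncomputable def Rop (η θ u : ℂ) (i j : ι) (S : Finset ι) : Matrix (ι → Fin 2) (ι → Fin 2) ℂ :=
  Matrix.of fun x y =>
    (if ∀ l, l ≠ i → l ≠ j → x l = y l then 1 else 0) *
      Rmat η u (θ - η * siteSpin S y) (x i, x j) (y i, y j)

/-- The boundary matrix `K(λ;θ)` acting on the spin at the site `a`. -/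
noncomputable def Kop (ζ lam θ : ℂ) (a : ι) : Matrix (ι → Fin 2) (ι → Fin 2) ℂ :=
  Matrix.diagonal fun x => Kmat ζ lam θ (x a) (x a)

theorem Rop_mulVec (η θ u : ℂ) {i j : ι} (hij : i ≠ j) {S : Finset ι} (hi : i ∉ S) (hj : j ∉ S)
    (v : (ι → Fin 2) → ℂ) (x : ι → Fin 2) :
    (Rop η θ u i j S *ᵥ v) x = ∑ a, ∑ b, Rmat η u (θ - η * siteSpin S x) (x i, x j) (a, b) *
      v (Function.update (Function.update x i a) j b) := by
  rw [← Fintype.sum_prod_type' (f := fun a b => Rmat η u (θ - η * siteSpin S x) (x i, x j) (a, b) *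
      v (Function.update (Function.update x i a) j b))]
  symm
  refine Finset.sum_of_injOn
    (fun p : Fin 2 × Fin 2 => Function.update (Function.update x i p.1) j p.2) ?_ ?_ ?_ ?_
  · rintro ⟨a, b⟩ - ⟨a', b'⟩ - h
    have h1 := congrFun h i
    have h2 := congrFun h j
    simp [hij] at h1 h2
    simp [h1, h2]
  · intro _ _; simp
  · intro y _ hy
    simp only [Rop, Matrix.of_apply]
    rw [if_neg, zero_mul, zero_mul]
    intro h
    refine hy ⟨(y i, y j), by simp, ?_⟩
    funext l
    by_cases hlj : l = j
    · subst hlj; simp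
    · by_cases hli : l = i
      · subst hli; simp [hlj]
      · simp [hlj, hli, h l hli hlj]
  · rintro ⟨a, b⟩ -
    have : ∀ l, l ≠ i → l ≠ j → x l = Function.update (Function.update x i a) j b l := by
      intro l h1 h2; simp [h1, h2]
    simp only [Rop, Matrix.of_apply]
    rw [if_pos this, siteSpin_update hj, siteSpin_update hi]
    simp [hij]

theorem matrix_ext_mulVec {n : Type*} [Fintype n] [DecidableEq n] {A B : Matrix n n ℂ}
    (h : ∀ v x, (A *ᵥ v) x = (B *ᵥ v) x) : A = B :=
  Matrix.mulVec_injective (funext fun v => funext fun x => h v x)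

/-- The dynamical Yang–Baxter equation for three distinct sites and an arbitrary set `S` of further
sites. The bound on `S` keeps all the shifted values of `θ` away from the zeros of `sinh`. -/
theorem Rop_dybe {η θ : ℂ} {N : ℕ}
    (hθ : ∀ k : ℤ, |k| ≤ (N : ℤ) + 1 → Complex.sinh (θ + (k : ℂ) * η) ≠ 0) (u v : ℂ)
    {i j k : ι} (hij : i ≠ j) (hik : i ≠ k) (hjk : j ≠ k) {S : Finset ι}
    (hi : i ∉ S) (hj : j ∉ S) (hk : k ∉ S) (hS : S.card ≤ N) :
    Rop η θ u i j (insert k S) * Rop η θ (u + v) i k S * Rop η θ v j k (insert i S) =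
      Rop η θ v j k S * Rop η θ (u + v) i k (insert j S) * Rop η θ u i j S := by
  refine matrix_ext_mulVec fun w x => ?_
  obtain ⟨m, hm, hmx⟩ := exists_siteSpin_eq S x
  rw [abs_le] at hm
  have hd : ∀ e : ℤ, |e| ≤ 1 → Complex.sinh (θ - η * siteSpin S x + e * η) ≠ 0 := by
    intro e he
    rw [abs_le] at he
    have := hθ (-m + e) (by rw [abs_le]; constructor <;> omega)
    rw [hmx]
    convert this using 2
    push_cast; ring
  have h0 := hd 0 (by simp)
  have hmm := hd (-1) (by simp)
  have hpp := hd 1 (by simp)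
  simp only [Int.cast_zero, zero_mul, add_zero, Int.cast_one, one_mul, Int.cast_neg,
    neg_mul, ← sub_eq_add_neg] at h0 hmm hpp
  have key := fun y₀ y₁ y₂ => dybe_entry η u v _ h0 hmm hpp (x i) (x j) (x k) y₀ y₁ y₂
  have hd' : ∀ t : ℂ, θ - η * (t + siteSpin S x) = θ - η * siteSpin S x - η * t := by intro t; ring
  simp only [← Matrix.mulVec_mulVec]
  simp only [Rop_mulVec η θ _ hij (S := insert k S) (by simp [hi, hik]) (by simp [hj, hjk]),
    Rop_mulVec η θ _ hij hi hj, Rop_mulVec η θ _ hik hi hk,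
    Rop_mulVec η θ _ hik (S := insert j S) (by simp [hi, hij]) (by simp [hk, hjk.symm]),
    Rop_mulVec η θ _ hjk hj hk,
    Rop_mulVec η θ _ hjk (S := insert i S) (by simp [hj, hij.symm]) (by simp [hk, hik.symm]),
    siteSpin_insert hi, siteSpin_insert hj, siteSpin_insert hk, siteSpin_update hi, siteSpin_update hj, siteSpin_update hk,
    Function.update_self, Function.update_of_ne hij, Function.update_of_ne hik,
    Function.update_of_ne hjk, Function.update_of_ne hij.symm, Function.update_of_ne hik.symm,
    Function.update_of_ne hjk.symm, hd']
  have n1 : ∀ a b c e f g : Fin 2, Function.update (Function.update (Function.update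
      (Function.update (Function.update (Function.update x i a) j b) i c) k e) j f) k g =
      Function.update (Function.update (Function.update x i c) j f) k g := by
    intros; funext l; simp only [Function.update_apply]; split_ifs <;> rfl
  have n2 : ∀ a b c e f g : Fin 2, Function.update (Function.update (Function.update
      (Function.update (Function.update (Function.update x j a) k b) i c) k e) i f) j g =
      Function.update (Function.update (Function.update x i f) j g) k e := by
    intros; funext l; simp only [Function.update_apply]; split_ifs <;> simp_all
  simp only [n1, n2]
  generalize hW : (fun a b c => w (Function.update (Function.update (Function.update x i a) j b) k c))
    = W
  have hW' : ∀ a b c,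
      w (Function.update (Function.update (Function.update x i a) j b) k c) = W a b c := by
    intro a b c; rw [← hW]
  simp only [hW']
  simp only [Fin.sum_univ_two] at key ⊢
  linear_combination W 0 0 0 * key 0 0 0 + W 0 0 1 * key 0 0 1 + W 0 1 0 * key 0 1 0 +
    W 0 1 1 * key 0 1 1 + W 1 0 0 * key 1 0 0 + W 1 0 1 * key 1 0 1 + W 1 1 0 * key 1 1 0 +
    W 1 1 1 * key 1 1 1

/-- `R_{ij}` commutes with `R_{kl}` if the shift of the latter involves both `i` and `j`: by the ice
rule `R_{ij}` preserves `σ^z_i + σ^z_j`, hence the shift. -/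
theorem Rop_comm (η θ u v : ℂ) {i j k l : ι} (hij : i ≠ j) (hkl : k ≠ l) {S S' : Finset ι}
    (hi : i ∉ S) (hj : j ∉ S) (hk : k ∉ S) (hl : l ∉ S) (hi' : i ∈ S') (hj' : j ∈ S')
    (hk' : k ∉ S') (hl' : l ∉ S') :
    Commute (Rop η θ u i j S) (Rop η θ v k l S') := by
  have hik : i ≠ k := fun h => hk' (h ▸ hi')
  have hil : i ≠ l := fun h => hl' (h ▸ hi')
  have hjk : j ≠ k := fun h => hk' (h ▸ hj')
  have hjl : j ≠ l := fun h => hl' (h ▸ hj')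
  refine matrix_ext_mulVec fun w x => ?_
  simp only [← Matrix.mulVec_mulVec, Rop_mulVec η θ _ hij hi hj, Rop_mulVec η θ _ hkl hk' hl',
    siteSpin_update hk, siteSpin_update hl, Function.update_of_ne hik, Function.update_of_ne hil,
    Function.update_of_ne hjk, Function.update_of_ne hjl, Function.update_of_ne hik.symm,
    Function.update_of_ne hil.symm, Function.update_of_ne hjk.symm, Function.update_of_ne hjl.symm,
    Finset.mul_sum]
  have hS' : ∀ y : ι → Fin 2, siteSpin S' y =
      szval (y i) + szval (y j) + siteSpin ((S'.erase i).erase j) y := by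
    intro y
    rw [siteSpin, ← Finset.add_sum_erase _ _ hi', 
      ← Finset.add_sum_erase (S'.erase i) _ (Finset.mem_erase.2 ⟨hij.symm, hj'⟩), ← add_assoc]
    rfl
  have hR : ∀ a b, Rmat η u (θ - η * siteSpin S x) (x i, x j) (a, b) = 0 ∨
      siteSpin S' (Function.update (Function.update x i a) j b) = siteSpin S' x := by
    intro a b
    by_cases h : szval (x i) + szval (x j) = szval a + szval b
    · right
      rw [hS', hS' x, siteSpin_update (by simp), siteSpin_update (by simp), h]
      simp [hij]
    · exact Or.inl (Rmat_eq_zero _ _ _ _ _ _ _ h)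
  have comm3 : ∀ f : Fin 2 → Fin 2 → Fin 2 → Fin 2 → ℂ,
      ∑ a, ∑ b, ∑ c, ∑ d, f a b c d = ∑ c, ∑ d, ∑ a, ∑ b, f a b c d := by
    intro f; simp only [Fin.sum_univ_two]; ring
  rw [comm3]
  refine Finset.sum_congr rfl fun c _ => Finset.sum_congr rfl fun d _ =>
    Finset.sum_congr rfl fun a _ => Finset.sum_congr rfl fun b _ => ?_
  have hu : Function.update (Function.update (Function.update (Function.update x i a) j b) k c) l d
      = Function.update (Function.update (Function.update (Function.update x k c) l d) i a) j b := by
    funext t; simp only [Function.update_apply]; split_ifs <;> simp_all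
  rcases hR a b with h | h
  · simp [h]
  · rw [h, hu]; ring

theorem Kop_comm (η ζ θ lam u : ℂ) {a k l : ι} (hkl : k ≠ l) {S : Finset ι} (hk : k ∉ S)
    (hl : l ∉ S) (ha : a ∈ S) : Commute (Kop ζ lam θ a) (Rop η θ u k l S) := by
  have hak : a ≠ k := fun h => hk (h ▸ ha)
  have hal : a ≠ l := fun h => hl (h ▸ ha)
  refine matrix_ext_mulVec fun w x => ?_
  simp only [← Matrix.mulVec_mulVec, Rop_mulVec η θ _ hkl hk hl, Kop, Matrix.mulVec_diagonal,
    Function.update_of_ne hak, Function.update_of_ne hal, Finset.mul_sum]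
  refine Finset.sum_congr rfl fun c _ => Finset.sum_congr rfl fun d _ => ?_
  ring

/-- The reflection equation for the bare boundary, where no quantum site shifts `θ`. -/
theorem Kop_refl (η ζ l₁ l₂ θ : ℂ) (h0 : Complex.sinh θ ≠ 0)
    (h1 : Complex.sinh (θ + ζ + l₁) ≠ 0) (h2 : Complex.sinh (ζ + l₁) ≠ 0)
    (h3 : Complex.sinh (θ + ζ + l₂) ≠ 0) (h4 : Complex.sinh (ζ + l₂) ≠ 0)
    {a b : ι} (hab : a ≠ b) :
    Rop η θ (l₁ - l₂) a b ∅ * Kop ζ l₁ θ a * Rop η θ (l₁ + l₂) b a ∅ * Kop ζ l₂ θ b =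
      Kop ζ l₂ θ b * Rop η θ (l₁ + l₂) a b ∅ * Kop ζ l₁ θ a * Rop η θ (l₁ - l₂) b a ∅ := by
  refine matrix_ext_mulVec fun w x => ?_
  have key := fun y₁ y₂ => refl_entry η ζ l₁ l₂ θ h0 h1 h2 h3 h4 (x a) (x b) y₁ y₂
  have hs : ∀ y : ι → Fin 2, θ - η * siteSpin ∅ y = θ := by intro y; simp [siteSpin]
  simp only [← Matrix.mulVec_mulVec, Kop, Matrix.mulVec_diagonal,
    Rop_mulVec η θ _ hab (Finset.notMem_empty a) (Finset.notMem_empty b),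
    Rop_mulVec η θ _ hab.symm (Finset.notMem_empty b) (Finset.notMem_empty a), hs,
    Function.update_self, Function.update_of_ne hab, Function.update_of_ne hab.symm]
  have n1 : ∀ p q r s : Fin 2, Function.update (Function.update (Function.update
      (Function.update x a p) b q) b r) a s = Function.update (Function.update x a s) b r := by
    intros; funext l; simp only [Function.update_apply]; split_ifs <;> simp_all
  simp only [n1]
  generalize hW : (fun p q => w (Function.update (Function.update x a p) b q)) = W
  have hW' : ∀ p q, w (Function.update (Function.update x a p) b q) = W p q := by
    intro p q; rw [← hW]
  simp only [hW']
  simp only [Fin.sum_univ_two] at key ⊢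
  linear_combination W 0 0 * key 0 0 + W 0 1 * key 0 1 + W 1 0 * key 1 0 + W 1 1 * key 1 1

end Lattice

/-! ### The reflection equation for dressed boundary operators -/

section Dressing

variable {ι : Type*} [Fintype ι] [DecidableEq ι]

/-- The boundary operator `K_a` dressed by the quantum sites in a list: for `[1, …, N]` it is
`R_{a1} ⋯ R_{aN} K_a R_{Na} ⋯ R_{1a}`, each factor being shifted by the spins of the sites that
follow in the list. -/
noncomputable def dressed (η ζ θ lam : ℂ) (ξ : ι → ℂ) (a : ι) :
    List ι → Matrix (ι → Fin 2) (ι → Fin 2) ℂ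
  | [] => Kop ζ lam θ a
  | i :: l => Rop η θ (lam - ξ i) a i l.toFinset * dressed η ζ θ lam ξ a l *
      Rop η θ (lam + ξ i) i a l.toFinset

/-- A dressed boundary operator at `a` commutes with any `R_{km}` away from `a` whose shift involves
`a` and all the dressing sites, since it preserves their total spin. -/
theorem dressed_comm (η ζ θ lam u : ℂ) (ξ : ι → ℂ) {a k m : ι} (hkm : k ≠ m) {S : Finset ι}
    (hk : k ∉ S) (hm : m ∉ S) (ha : a ∈ S) (l : List ι) (hl : (a :: l).Nodup)
    (hlS : ∀ i ∈ l, i ∈ S) : Commute (dressed η ζ θ lam ξ a l) (Rop η θ u k m S) := by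
  induction l with
  | nil => exact Kop_comm η ζ θ lam u hkm hk hm ha
  | cons i l ih =>
    simp only [List.nodup_cons, List.mem_cons, not_or] at hl
    obtain ⟨⟨hai, hal⟩, hil, hnd⟩ := hl
    have ih' := ih (by simp [hal, hnd]) fun j hj => hlS j (List.mem_cons_of_mem _ hj)
    have hiS := hlS i (by simp)
    have hkl : k ∉ l.toFinset := fun h => hk (hlS k (by simp_all))
    have hml : m ∉ l.toFinset := fun h => hm (hlS m (by simp_all))
    have hal' : a ∉ l.toFinset := by simpa using hal
    have hil' : i ∉ l.toFinset := by simpa using hil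
    exact ((Rop_comm η θ _ u hai hkm hal' hil' hkl hml ha hiS hk hm).mul_left ih').mul_left
      (Rop_comm η θ _ u (Ne.symm hai) hkm hil' hal' hkl hml hiS ha hk hm)

/-- The algebra of adding one quantum site `q` to the reflection equation for two auxiliary lines
`1, 2`. Here `A, B, C, E, F, G, H, J` stand for `R₁₂(λ₁-λ₂)`, `R₁q`, `R₂q`, `R_q1`, `R_q2`,
`R₂₁(λ₁+λ₂)`, `R₁₂(λ₁+λ₂)`, `R₂₁(λ₁-λ₂)`; a prime marks an additional shift by the spin of the
remaining one of the sites `1, 2, q`, `A₀` is `A'` without that shift, and `t₁, t₂` are the operators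
before the dressing. The hypotheses `d₁, …, d₄` are Yang–Baxter equations. -/
theorem dressing_step {M : Type*} [Monoid M]
    {A' A₀ B B' C C' E E' F F' G G' H H' J J' t₁ t₂ : M}
    (d₁ : A' * B * C' = C * B' * A₀) (d₂ : C' * G * E' = E * G' * C)
    (d₃ : F' * E * J' = J * E' * F) (d₄ : B' * H * F' = F * H' * B)
    (c₁ : Commute t₁ C') (c₂ : Commute t₂ E') (c₃ : Commute t₂ B') (c₄ : Commute t₁ F')
    (ind : A₀ * t₁ * G * t₂ = t₂ * H * t₁ * J) :
    A' * (B * t₁ * E) * G' * (C * t₂ * F) = (C * t₂ * F) * H' * (B * t₁ * E) * J' := by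
  calc A' * (B * t₁ * E) * G' * (C * t₂ * F)
      = A' * B * t₁ * (E * G' * C) * t₂ * F := by simp only [mul_assoc]
    _ = A' * B * (t₁ * C') * G * (E' * t₂) * F := by rw [← d₂]; simp only [mul_assoc]
    _ = (A' * B * C') * t₁ * G * t₂ * E' * F := by
        rw [c₁.eq, ← c₂.eq]; simp only [mul_assoc]
    _ = C * B' * (A₀ * t₁ * G * t₂) * E' * F := by rw [d₁]; simp only [mul_assoc]
    _ = C * (B' * t₂) * H * t₁ * (J * E' * F) := by rw [ind]; simp only [mul_assoc]
    _ = C * t₂ * B' * H * (t₁ * F') * E * J' := by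
        rw [← c₃.eq, ← d₃]; simp only [mul_assoc]
    _ = C * t₂ * (B' * H * F') * t₁ * E * J' := by rw [c₄.eq]; simp only [mul_assoc]
    _ = (C * t₂ * F) * H' * (B * t₁ * E) * J' := by rw [d₄]; simp only [mul_assoc]

/-- The dynamical reflection equation for dressed boundary operators at two auxiliary sites. -/
theorem dressed_refl {η ζ θ l₁ l₂ : ℂ} {N : ℕ}
    (hθ : ∀ k : ℤ, |k| ≤ (N : ℤ) + 1 → Complex.sinh (θ + (k : ℂ) * η) ≠ 0)
    (h1 : Complex.sinh (θ + ζ + l₁) ≠ 0) (h2 : Complex.sinh (ζ + l₁) ≠ 0)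
    (h3 : Complex.sinh (θ + ζ + l₂) ≠ 0) (h4 : Complex.sinh (ζ + l₂) ≠ 0)
    (ξ : ι → ℂ) {a b : ι} (l : List ι) (hl : (a :: b :: l).Nodup) (hN : l.length ≤ N) :
    Rop η θ (l₁ - l₂) a b l.toFinset * dressed η ζ θ l₁ ξ a l * Rop η θ (l₁ + l₂) b a l.toFinset *
        dressed η ζ θ l₂ ξ b l =
      dressed η ζ θ l₂ ξ b l * Rop η θ (l₁ + l₂) a b l.toFinset * dressed η ζ θ l₁ ξ a l *
        Rop η θ (l₁ - l₂) b a l.toFinset := by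
  induction l with
  | nil =>
    have h0 : Complex.sinh θ ≠ 0 := by simpa using hθ 0 (by simp; omega)
    exact Kop_refl η ζ l₁ l₂ θ h0 h1 h2 h3 h4 (by simpa using hl)
  | cons q l ih =>
    simp only [List.nodup_cons, List.mem_cons, not_or] at hl
    obtain ⟨⟨hab, haq, hal⟩, ⟨hbq, hbl⟩, hql, hnd⟩ := hl
    rw [List.length_cons] at hN
    have ih' := ih (by simp [*]) (by omega)
    have hS : l.toFinset.card ≤ N := (List.toFinset_card_le l).trans (by omega)
    have ha : a ∉ l.toFinset := by simpa using hal
    have hb : b ∉ l.toFinset := by simpa using hbl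
    have hq : q ∉ l.toFinset := by simpa using hql
    have hba := Ne.symm hab
    have hqa := Ne.symm haq
    have hqb := Ne.symm hbq
    have d₁ := Rop_dybe hθ (l₁ - l₂) (l₂ - ξ q) hab haq hbq ha hb hq hS
    have d₂ := Rop_dybe hθ (l₂ - ξ q) (l₁ + ξ q) hbq hba hqa hb hq ha hS
    have d₃ := Rop_dybe hθ (l₂ + ξ q) (l₁ - l₂) hqb hqa hba hq hb ha hS
    have d₄ := Rop_dybe hθ (l₁ - ξ q) (l₂ + ξ q) haq hab hqb ha hq hb hS
    rw [show l₁ - l₂ + (l₂ - ξ q) = l₁ - ξ q by ring] at d₁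
    rw [show l₂ - ξ q + (l₁ + ξ q) = l₁ + l₂ by ring] at d₂
    rw [show l₂ + ξ q + (l₁ - l₂) = l₁ + ξ q by ring] at d₃
    rw [show l₁ - ξ q + (l₂ + ξ q) = l₁ + l₂ by ring] at d₄
    rw [List.toFinset_cons]
    have hsub : ∀ c, ∀ i ∈ l, i ∈ insert c l.toFinset := fun c i hi => by simp [hi]
    refine dressing_step d₁ d₂ d₃ d₄ ?_ ?_ ?_ ?_ ih'
    · exact dressed_comm η ζ θ _ _ ξ hbq (by simp [*]) (by simp [*]) (by simp) l (by simp [*]) (hsub a)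
    · exact dressed_comm η ζ θ _ _ ξ hqa (by simp [*]) (by simp [*]) (by simp) l (by simp [*]) (hsub b)
    · exact dressed_comm η ζ θ _ _ ξ haq (by simp [*]) (by simp [*]) (by simp) l (by simp [*]) (hsub b)
    · exact dressed_comm η ζ θ _ _ ξ hqb (by simp [*]) (by simp [*]) (by simp) l (by simp [*]) (hsub a)

end Dressing

/-! ### Embedding the double-row monodromy matrix; the exchange relation -/

section Embedding

variable {N : ℕ}

/-- The configuration on two auxiliary sites and `N` quantum sites with value `c` at the auxiliary
site `a`, value `e` at the other auxiliary site, and quantum part `s`. -/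
noncomputable def spinConfig (a c e : Fin 2) (s : Fin N → Fin 2) : Fin 2 ⊕ Fin N → Fin 2 :=
  Sum.elim (fun t => if t = a then c else e) s

/-- The operator `A` on `ℂ² ⊗ (ℂ²)^{⊗N}`, acting with its auxiliary factor placed at the auxiliary
site `a` and the auxiliary site `b` as a spectator (used for `{a, b} = {0, 1}`). -/
noncomputable def embAux (a b : Fin 2)
    (A : Matrix (Fin 2 × (Fin N → Fin 2)) (Fin 2 × (Fin N → Fin 2)) ℂ) :
    Matrix (Fin 2 ⊕ Fin N → Fin 2) (Fin 2 ⊕ Fin N → Fin 2) ℂ :=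
  Matrix.of fun x y => (if x (.inl b) = y (.inl b) then 1 else 0) *
    A (x (.inl a), fun j => x (.inr j)) (y (.inl a), fun j => y (.inr j))

theorem fin2_eq {a b : Fin 2} (hab : a ≠ b) (t : Fin 2) : t = a ∨ t = b := by
  revert a b t; decide

theorem eq_spinConfig {a b : Fin 2} (hab : a ≠ b) (x : Fin 2 ⊕ Fin N → Fin 2) :
    x = spinConfig a (x (.inl a)) (x (.inl b)) fun j => x (.inr j) := by
  funext t
  rcases t with t | t
  · rcases fin2_eq hab t with rfl | rfl
    · simp [spinConfig]
    · simp [spinConfig, hab.symm]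
  · rfl

theorem embAux_mulVec {a b : Fin 2} (hab : a ≠ b)
    (A : Matrix (Fin 2 × (Fin N → Fin 2)) (Fin 2 × (Fin N → Fin 2)) ℂ)
    (v : (Fin 2 ⊕ Fin N → Fin 2) → ℂ) (x : Fin 2 ⊕ Fin N → Fin 2) :
    (embAux a b A *ᵥ v) x = ∑ p, A (x (.inl a), fun j => x (.inr j)) p *
      v (spinConfig a p.1 (x (.inl b)) p.2) := by
  symm
  refine Finset.sum_of_injOn (fun p : Fin 2 × (Fin N → Fin 2) => spinConfig a p.1 (x (.inl b)) p.2)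
    ?_ ?_ ?_ ?_
  · rintro ⟨c, s⟩ - ⟨c', s'⟩ - h
    have h1 := congrFun h (.inl a)
    have h2 : s = s' := funext fun j => congrFun h (.inr j)
    simp [spinConfig] at h1
    simp [h1, h2]
  · intro _ _; simp
  · intro y _ hy
    simp only [embAux, Matrix.of_apply]
    rw [if_neg, zero_mul, zero_mul]
    intro h
    refine hy ⟨(y (.inl a), fun j => y (.inr j)), by simp, ?_⟩
    simp only [h]
    exact (eq_spinConfig hab y).symm
  · rintro ⟨c, s⟩ -
    simp [embAux, spinConfig, hab.symm]

theorem embAux_mul {a b : Fin 2} (hab : a ≠ b)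
    (A B : Matrix (Fin 2 × (Fin N → Fin 2)) (Fin 2 × (Fin N → Fin 2)) ℂ) :
    embAux a b (A * B) = embAux a b A * embAux a b B := by
  refine matrix_ext_mulVec fun v x => ?_
  have h : ∀ c e s, spinConfig (N := N) a c e s (.inl b) = e := by simp [spinConfig, hab.symm]
  have h' : ∀ c e s, spinConfig (N := N) a c e s (.inl a) = c := by simp [spinConfig]
  have h'' : ∀ c e s j, spinConfig (N := N) a c e s (.inr j) = s j := by simp [spinConfig]
  simp only [← Matrix.mulVec_mulVec, embAux_mulVec hab, h, h', h'']
  simp only [Matrix.mul_apply, Finset.sum_mul, Finset.mul_sum, Prod.mk.eta]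
  rw [Finset.sum_comm]
  simp only [mul_assoc]

theorem embAux_K0emb (ζ lam θ : ℂ) {a b : Fin 2} (hab : a ≠ b) :
    embAux a b (K0emb (N := N) ζ lam θ) = Kop ζ lam θ (.inl a) := by
  ext x y
  simp only [embAux, K0emb, Kop, Matrix.of_apply, Matrix.diagonal_apply]
  by_cases h : x = y
  · simp [h]
  · rw [if_neg h]
    by_cases h1 : x (.inl b) = y (.inl b)
    · by_cases h2 : (fun j => x (.inr j)) = fun j => y (.inr j)
      · have h3 : x (.inl a) ≠ y (.inl a) := by
          intro h3
          apply h
          rw [eq_spinConfig hab x, eq_spinConfig hab y, h1, h2, h3]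
        have : Kmat ζ lam θ (x (.inl a)) (y (.inl a)) = 0 := by
          generalize x (.inl a) = p at *
          generalize y (.inl a) = q at *
          fin_cases p <;> fin_cases q <;> simp [Kmat] at h3 ⊢
        simp [this]
      · simp [h2]
    · simp [h1]

theorem siteSpin_inr (S : Finset (Fin N)) (l : List (Fin N)) (hl : l.toFinset = S)
    (y : Fin 2 ⊕ Fin N → Fin 2) :
    siteSpin (l.map Sum.inr).toFinset y = szSum S fun j => y (.inr j) := by
  have : (l.map Sum.inr).toFinset = S.map (⟨Sum.inr, Sum.inr_injective⟩ : Fin N ↪ Fin 2 ⊕ Fin N) := by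
    subst hl; ext t; simp
  rw [this, siteSpin, Finset.sum_map]
  rfl

theorem off_iff {a b : Fin 2} (hab : a ≠ b) (i : Fin N) (x y : Fin 2 ⊕ Fin N → Fin 2) :
    (∀ l, l ≠ .inl a → l ≠ .inr i → x l = y l) ↔
      x (.inl b) = y (.inl b) ∧ ∀ j, j ≠ i → x (.inr j) = y (.inr j) := by
  constructor
  · intro h
    exact ⟨h _ (by simpa using hab.symm) (by simp), fun j hj => h _ (by simp) (by simpa using hj)⟩
  · rintro ⟨h1, h2⟩ (t | t) h3 h4
    · rcases fin2_eq hab t with rfl | rfl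
      · exact absurd rfl h3
      · exact h1
    · exact h2 t (by simpa using h4)

theorem embAux_R0i (η lam θ : ℂ) {a b : Fin 2} (hab : a ≠ b) (i : Fin N) (l : List (Fin N))
    (hl : l.toFinset = Finset.univ.filter fun j => i < j) :
    embAux a b (R0i η lam θ i) = Rop η θ lam (.inl a) (.inr i) (l.map Sum.inr).toFinset := by
  ext x y
  simp only [embAux, R0i, Rop, Matrix.of_apply, off_iff hab, siteSpin_inr _ l hl, ite_and, ← mul_assoc]
  congr 1
  split_ifs <;> simp

theorem embAux_Ri0 (η lam θ : ℂ) {a b : Fin 2} (hab : a ≠ b) (i : Fin N) (l : List (Fin N))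
    (hl : l.toFinset = Finset.univ.filter fun j => i < j) :
    embAux a b (Ri0 η lam θ i) = Rop η θ lam (.inr i) (.inl a) (l.map Sum.inr).toFinset := by
  ext x y
  have : (∀ l, l ≠ .inr i → l ≠ .inl a → x l = y l) ↔
      x (.inl b) = y (.inl b) ∧ ∀ j, j ≠ i → x (.inr j) = y (.inr j) := by
    rw [← off_iff hab]; exact ⟨fun h l h1 h2 => h l h2 h1, fun h l h1 h2 => h l h2 h1⟩
  simp only [embAux, Ri0, Rop, Matrix.of_apply, this, siteSpin_inr _ l hl, ite_and, ← mul_assoc]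
  congr 1
  split_ifs <;> simp

/-- The embedded partial double-row product over a final segment `l` of the sites, in increasing
order. As `l` is upward closed, what follows `i` in `l` are exactly the sites `j > i` that
enter the shifts of the factors at `i`. -/
theorem embAux_list (η ζ lam θ : ℂ) (ξ : Fin N → ℂ) {a b : Fin 2} (hab : a ≠ b) (l : List (Fin N))
    (hl : l.Pairwise (· < ·)) (hup : ∀ i ∈ l, ∀ j, i < j → j ∈ l) :
    embAux a b ((l.map fun i => R0i η (lam - ξ i) θ i).prod * K0emb ζ lam θ *
        (l.map fun i => Ri0 η (lam + ξ i) θ i).reverse.prod) =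
      dressed η ζ θ lam (Sum.elim 0 ξ) (.inl a) (l.map Sum.inr) := by
  induction l with
  | nil => simp [dressed, embAux_K0emb _ _ _ hab]
  | cons i l ih =>
    rw [List.pairwise_cons] at hl
    have hup' : ∀ i ∈ l, ∀ j, i < j → j ∈ l := by
      intro k hk j hkj
      rcases List.mem_cons.1 (hup k (List.mem_cons_of_mem _ hk) j hkj) with rfl | h
      · exact absurd (hl.1 k hk) (not_lt.2 hkj.le)
      · exact h
    have hS : l.toFinset = Finset.univ.filter fun j => i < j := by
      ext j
      simp only [List.mem_toFinset, Finset.mem_filter, Finset.mem_univ, true_and]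
      refine ⟨hl.1 j, fun h => ?_⟩
      rcases List.mem_cons.1 (hup i (by simp) j h) with rfl | h'
      · exact absurd h (lt_irrefl _)
      · exact h'
    rw [List.map_cons, List.map_cons, List.map_cons, dressed, ← ih hl.2 hup', Sum.elim_inr,
      ← embAux_R0i η _ θ hab i l hS, ← embAux_Ri0 η _ θ hab i l hS, ← embAux_mul hab, ← embAux_mul hab]
    simp only [List.prod_cons, List.reverse_cons, List.prod_append, List.prod_nil, mul_one,
      mul_assoc]

theorem embAux_Tcal (η ζ lam θ : ℂ) (ξ : Fin N → ℂ) {a b : Fin 2} (hab : a ≠ b) :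
    embAux a b (Tcal η ζ ξ lam θ) =
      dressed η ζ θ lam (Sum.elim 0 ξ) (.inl a) ((List.finRange N).map Sum.inr) := by
  rw [← embAux_list η ζ lam θ ξ hab _ (List.pairwise_lt_finRange N) (by simp), Tcal, Tmat, That,
    List.ofFn_eq_map, List.ofFn_eq_map]

end Embedding

section Extraction

variable {N : ℕ}

/-- The `(++, --)` component of the reflection equation. By the ice rule only the diagonal element
`R^{+-}_{+-}(λ₁ + λ₂)` survives between the two operators `ℬ`, with its shift by the total spin. -/
theorem B_exchange {η ζ θ l₁ l₂ : ℂ}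
    (hθ : ∀ k : ℤ, |k| ≤ (N : ℤ) + 1 → Complex.sinh (θ + (k : ℂ) * η) ≠ 0)
    (h1 : Complex.sinh (θ + ζ + l₁) ≠ 0) (h2 : Complex.sinh (ζ + l₁) ≠ 0)
    (h3 : Complex.sinh (θ + ζ + l₂) ≠ 0) (h4 : Complex.sinh (ζ + l₂) ≠ 0)
    (ξ : Fin N → ℂ) (hne : Complex.sinh (l₁ - l₂ + η) ≠ 0) (f : (Fin N → Fin 2) → ℂ)
    (hf : f = fun s => Rmat η (l₁ + l₂) (θ - η * szSum Finset.univ s) (0, 1) (0, 1)) :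
    Bop η ζ ξ l₁ θ * Matrix.diagonal f * Bop η ζ ξ l₂ θ =
      Bop η ζ ξ l₂ θ * Matrix.diagonal f * Bop η ζ ξ l₁ θ := by
  have h01 : (0 : Fin 2) ≠ 1 := by decide
  have key := dressed_refl hθ h1 h2 h3 h4 (Sum.elim 0 ξ) (a := (Sum.inl 0 : Fin 2 ⊕ Fin N))
    (b := .inl 1) ((List.finRange N).map Sum.inr)
    (by simp [List.nodup_map_iff Sum.inr_injective, List.nodup_finRange]) (by simp)
  rw [← embAux_Tcal η ζ l₁ θ ξ h01, ← embAux_Tcal η ζ l₂ θ ξ h01.symm] at key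
  refine matrix_ext_mulVec fun w s => ?_
  have n1 : Sum.inl 0 ∉ ((List.finRange N).map (Sum.inr : Fin N → Fin 2 ⊕ Fin N)).toFinset := by simp
  have n2 : Sum.inl 1 ∉ ((List.finRange N).map (Sum.inr : Fin N → Fin 2 ⊕ Fin N)).toFinset := by simp
  have n3 : (Sum.inl 0 : Fin 2 ⊕ Fin N) ≠ Sum.inl 1 := by simp
  have hz : ∀ x : Fin 2 ⊕ Fin N → Fin 2,
      siteSpin ((List.finRange N).map Sum.inr).toFinset x = szSum Finset.univ fun j => x (.inr j) :=
    siteSpin_inr _ _ (by ext; simp)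
  have m0 : ∀ c e (t : Fin N → Fin 2), spinConfig 0 c e t (.inl 0) = c := by simp [spinConfig]
  have m1 : ∀ c e (t : Fin N → Fin 2), spinConfig 0 c e t (.inl 1) = e := by simp [spinConfig]
  have mr : ∀ c e (t : Fin N → Fin 2) j, spinConfig 0 c e t (.inr j) = t j := by simp [spinConfig]
  have F1 : ∀ u v p q t, (Rop η θ u (Sum.inl 0) (Sum.inl 1)
      ((List.finRange N).map (Sum.inr : Fin N → Fin 2 ⊕ Fin N)).toFinset *ᵥ v) (spinConfig 0 p q t) =
      ∑ a, ∑ b, Rmat η u (θ - η * szSum Finset.univ t) (p, q) (a, b) * v (spinConfig 0 a b t) := by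
    intro u v p q t
    rw [Rop_mulVec η θ _ n3 n1 n2]
    simp only [hz, m0, m1, mr]
    refine Finset.sum_congr rfl fun a _ => Finset.sum_congr rfl fun b _ => ?_
    congr 2
    rw [eq_spinConfig h01 (Function.update _ _ _)]
    simp [mr]
  have F2 : ∀ u v p q t, (Rop η θ u (Sum.inl 1) (Sum.inl 0)
      ((List.finRange N).map (Sum.inr : Fin N → Fin 2 ⊕ Fin N)).toFinset *ᵥ v) (spinConfig 0 p q t) =
      ∑ a, ∑ b, Rmat η u (θ - η * szSum Finset.univ t) (q, p) (a, b) * v (spinConfig 0 b a t) := by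
    intro u v p q t
    rw [Rop_mulVec η θ _ n3.symm n2 n1]
    simp only [hz, m0, m1, mr]
    refine Finset.sum_congr rfl fun a _ => Finset.sum_congr rfl fun b _ => ?_
    congr 2
    rw [eq_spinConfig h01 (Function.update _ _ _)]
    simp [mr]
  have F3 : ∀ A v p q (t : Fin N → Fin 2), (embAux 0 1 A *ᵥ v) (spinConfig 0 p q t) =
      ∑ c, ∑ t', A (p, t) (c, t') * v (spinConfig 0 c q t') := by
    intro A v p q t
    rw [embAux_mulVec h01, Fintype.sum_prod_type]
    simp only [m0, m1, mr]
  have F4 : ∀ A v p q (t : Fin N → Fin 2), (embAux 1 0 A *ᵥ v) (spinConfig 0 p q t) =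
      ∑ c, ∑ t', A (q, t) (c, t') * v (spinConfig 0 p c t') := by
    intro A v p q t
    rw [embAux_mulVec h01.symm, Fintype.sum_prod_type]
    simp only [m0, m1, mr]
    refine Finset.sum_congr rfl fun c _ => Finset.sum_congr rfl fun t' _ => ?_
    congr 2
    rw [eq_spinConfig h01 (spinConfig 1 c p t')]
    simp [spinConfig]
  -- Only the component of the right argument with both auxiliary spins down is needed.
  obtain ⟨V, hV⟩ : ∃ V : (Fin 2 ⊕ Fin N → Fin 2) → ℂ, ∀ c e t,
      V (spinConfig 0 c e t) = if c = 1 ∧ e = 1 then w t else 0 :=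
    ⟨fun y => if y (.inl 0) = 1 ∧ y (.inl 1) = 1 then w (fun j => y (.inr j)) else 0,
      fun c e t => by simp only [m0, m1, mr]⟩
  have key2 := congrFun (congrArg (fun A => A *ᵥ V) key) (spinConfig 0 0 0 s)
  have r0 : ∀ u d, Rmat η u d (0, 0) (0, 0) = Complex.sinh (u + η) := Rmat_pp η
  have r0' : ∀ u d, Rmat η u d (1, 1) (1, 1) = Complex.sinh (u + η) := Rmat_mm η
  have r2 : ∀ u d, Rmat η u d (0, 1) (1, 1) = 0 := by simp [Rmat]
  have r3 : ∀ u d, Rmat η u d (0, 0) (0, 1) = 0 := by simp [Rmat]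
  have r4 : ∀ u d, Rmat η u d (0, 0) (1, 0) = 0 := by simp [Rmat]
  have r5 : ∀ u d, Rmat η u d (0, 0) (1, 1) = 0 := by simp [Rmat]
  have r7 : ∀ u d, Rmat η u d (1, 0) (1, 1) = 0 := by simp [Rmat]
  have f01 : ((0 : Fin 2) = 1) = False := by simp
  simp only [← Matrix.mulVec_mulVec, F1, F2, F3, F4, Fin.sum_univ_two, hV, r0, r0', r2, r3, r4,
    r5, r7, f01, and_true, and_false, true_and, if_true, if_false, mul_zero, zero_mul, add_zero,
    zero_add, Finset.sum_const_zero] at key2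
  have hB : ∀ l v t, (Bop η ζ ξ l θ *ᵥ v) t = ∑ t', Tcal η ζ ξ l θ (0, t) (1, t') * v t' :=
    fun _ _ _ => rfl
  simp only [← Matrix.mulVec_mulVec, hB, Matrix.mulVec_diagonal, hf]
  apply mul_left_cancel₀ hne
  refine key2.trans ?_
  simp only [Finset.mul_sum]
  refine Finset.sum_congr rfl fun _ _ => Finset.sum_congr rfl fun _ _ => ?_
  ring

end Extraction

/-! ### Weight conservation and removal of the genericity assumptions -/

section Final

variable {N : ℕ}

/-- The total `σ^z`-eigenvalue of the auxiliary and all quantum spins. -/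
noncomputable def totalSpin (p : Fin 2 × (Fin N → Fin 2)) : ℂ := szval p.1 + szSum Finset.univ p.2

theorem szSum_off {i : Fin N} {s t : Fin N → Fin 2} (h : ∀ j, j ≠ i → s j = t j) :
    szSum Finset.univ s - szval (s i) = szSum Finset.univ t - szval (t i) := by
  rw [szSum, szSum, ← Finset.add_sum_erase _ _ (Finset.mem_univ i),
    ← Finset.add_sum_erase _ (fun j => szval (t j)) (Finset.mem_univ i), add_sub_cancel_left,
    add_sub_cancel_left]
  exact Finset.sum_congr rfl fun j hj => by rw [h j (Finset.ne_of_mem_erase hj)]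

theorem commute_diagonal {n : Type*} [Fintype n] [DecidableEq n] {d : n → ℂ} {A : Matrix n n ℂ}
    (h : ∀ p q, d p ≠ d q → A p q = 0) : Commute (Matrix.diagonal d) A := by
  ext p q
  rw [Matrix.diagonal_mul, Matrix.mul_diagonal]
  by_cases hd : d p = d q
  · rw [hd, mul_comm]
  · rw [h p q hd]; simp

theorem R0i_conserves (η lam θ : ℂ) (i : Fin N) :
    Commute (Matrix.diagonal totalSpin) (R0i η lam θ i) := by
  refine commute_diagonal fun p q h => ?_
  simp only [R0i, Matrix.of_apply]
  split_ifs with h'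
  · rw [one_mul]
    refine Rmat_eq_zero _ _ _ _ _ _ _ fun e => h ?_
    rw [totalSpin, totalSpin]
    linear_combination e + szSum_off h'
  · simp

theorem Ri0_conserves (η lam θ : ℂ) (i : Fin N) :
    Commute (Matrix.diagonal totalSpin) (Ri0 η lam θ i) := by
  refine commute_diagonal fun p q h => ?_
  simp only [Ri0, Matrix.of_apply]
  split_ifs with h'
  · rw [one_mul]
    refine Rmat_eq_zero _ _ _ _ _ _ _ fun e => h ?_
    rw [totalSpin, totalSpin]
    linear_combination e + szSum_off h'
  · simp

theorem K0emb_conserves (ζ lam θ : ℂ) :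
    Commute (Matrix.diagonal (totalSpin (N := N))) (K0emb ζ lam θ) := by
  refine commute_diagonal ?_
  rintro ⟨a, s⟩ ⟨b, t⟩ h
  simp only [K0emb, Matrix.of_apply]
  by_cases hst : s = t
  · subst hst
    have : a ≠ b := by rintro rfl; exact h rfl
    fin_cases a <;> fin_cases b <;> simp [Kmat] at this ⊢
  · simp [hst]

theorem Tcal_conserves (η ζ lam θ : ℂ) (ξ : Fin N → ℂ) :
    Commute (Matrix.diagonal totalSpin) (Tcal η ζ ξ lam θ) := by
  refine ((Commute.list_prod_right _ _ ?_).mul_right (K0emb_conserves ζ lam θ)).mul_right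
    (Commute.list_prod_right _ _ ?_)
  · intro A hA
    obtain ⟨i, rfl⟩ := (List.mem_ofFn' _ _).1 hA
    exact R0i_conserves _ _ _ _
  · intro A hA
    obtain ⟨i, rfl⟩ := (List.mem_ofFn' _ _).1 (List.mem_reverse.1 hA)
    exact Ri0_conserves _ _ _ _

/-- `ℬ` moves the auxiliary spin from `-` to `+`, hence lowers the total quantum spin by `2`. -/
theorem Bop_eq_zero (η ζ lam θ : ℂ) (ξ : Fin N → ℂ) (s t : Fin N → Fin 2)
    (h : szSum Finset.univ t ≠ szSum Finset.univ s + 2) : Bop η ζ ξ lam θ s t = 0 := by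
  have := congrFun (congrFun (Tcal_conserves η ζ lam θ ξ).eq (0, s)) (1, t)
  rw [Matrix.diagonal_mul, Matrix.mul_diagonal] at this
  have h' : (szSum Finset.univ s + 2 - szSum Finset.univ t) * Bop η ζ ξ lam θ s t = 0 := by
    simp only [Bop, Matrix.of_apply]
    simp only [totalSpin, szval, if_true, if_neg (one_ne_zero : (1 : Fin 2) ≠ 0)] at this
    linear_combination this
  exact (mul_eq_zero.1 h').resolve_left fun e => h (by linear_combination -e)

/-- Commutation away from the zeros of the two scalar factors `sinh (λ₁ - λ₂ + η)` and
`sinh (λ₁ + λ₂)` of the exchange relation. -/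
theorem B_commute_generic {η ζ θ l₁ l₂ : ℂ}
    (hθ : ∀ k : ℤ, |k| ≤ (N : ℤ) + 1 → Complex.sinh (θ + (k : ℂ) * η) ≠ 0)
    (h1 : Complex.sinh (θ + ζ + l₁) ≠ 0) (h2 : Complex.sinh (ζ + l₁) ≠ 0)
    (h3 : Complex.sinh (θ + ζ + l₂) ≠ 0) (h4 : Complex.sinh (ζ + l₂) ≠ 0)
    (ξ : Fin N → ℂ) (hm : Complex.sinh (l₁ - l₂ + η) ≠ 0) (hp : Complex.sinh (l₁ + l₂) ≠ 0) :
    Bop η ζ ξ l₁ θ * Bop η ζ ξ l₂ θ = Bop η ζ ξ l₂ θ * Bop η ζ ξ l₁ θ := by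
  have hex := B_exchange hθ h1 h2 h3 h4 ξ hm _ rfl
  ext s u
  by_cases hs : ∃ t₀ : Fin N → Fin 2, szSum Finset.univ t₀ = szSum Finset.univ s + 2
  · obtain ⟨t₀, ht₀⟩ := hs
    have e := congrFun (congrFun hex s) u
    -- In row `s` the intermediate states all have the spin of `t₀`, so the middle factor is the
    -- constant `c`; `t₀` being an actual state makes its denominator nonzero.
    set c := Rmat η (l₁ + l₂) (θ - η * szSum Finset.univ t₀) (0, 1) (0, 1) with hc
    have hc0 : c ≠ 0 := by
      obtain ⟨k, hk, hkt⟩ := exists_siteSpin_eq Finset.univ t₀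
      change szSum Finset.univ t₀ = k at hkt
      rw [Finset.card_univ, Fintype.card_fin, abs_le] at hk
      rw [hc, Rmat_pm, hkt]
      refine div_ne_zero (mul_ne_zero hp ?_) ?_
      · convert hθ (-k - 1) (by rw [abs_le]; constructor <;> omega) using 2
        push_cast; ring
      · convert hθ (-k) (by rw [abs_le]; constructor <;> omega) using 2
        push_cast; ring
    have hsum : ∀ l l', (Bop η ζ ξ l θ * Matrix.diagonal (fun s => Rmat η (l₁ + l₂)
        (θ - η * szSum Finset.univ s) (0, 1) (0, 1)) * Bop η ζ ξ l' θ :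
          Matrix (Fin N → Fin 2) (Fin N → Fin 2) ℂ) s u = c * (Bop η ζ ξ l θ * Bop η ζ ξ l' θ) s u := by
      intro l l'
      rw [Matrix.mul_apply, Matrix.mul_apply, Finset.mul_sum]
      refine Finset.sum_congr rfl fun t _ => ?_
      rw [Matrix.mul_diagonal]
      by_cases ht : szSum Finset.univ t = szSum Finset.univ s + 2
      · rw [hc, ht, ht₀]; ring
      · rw [Bop_eq_zero _ _ _ _ _ _ _ ht]; ring
    rw [hsum, hsum] at e
    exact mul_left_cancel₀ hc0 e
  -- No state has the spin required of an intermediate state, so row `s` of `ℬ` vanishes.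
  · push Not at hs
    have hz : ∀ l t, Bop η ζ ξ l θ s t = 0 := fun l t => Bop_eq_zero _ _ _ _ _ _ _ (hs t)
    simp [Matrix.mul_apply, hz]

theorem continuous_Rmat (η d : ℂ) (p q : Fin 2 × Fin 2) :
    Continuous fun l => Rmat η l d p q := by
  have hs := Complex.continuous_sinh
  simp only [Rmat, Matrix.of_apply]
  split_ifs <;> fun_prop

theorem continuousAt_Bop {η ζ θ l₀ : ℂ} (ξ : Fin N → ℂ)
    (h1 : Complex.sinh (θ + ζ + l₀) ≠ 0) (h2 : Complex.sinh (ζ + l₀) ≠ 0) :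
    ContinuousAt (fun l => Bop η ζ ξ l θ) l₀ := by
  have hT : Continuous fun l => Tmat η ξ l θ := by
    simp only [Tmat, List.ofFn_eq_map]
    refine continuous_list_prod _ fun i _ => ?_
    refine continuous_matrix fun p q => ?_
    exact continuous_const.mul ((continuous_Rmat η _ _ _).comp (continuous_id.sub continuous_const))
  have hT' : Continuous fun l => That η ξ l θ := by
    simp only [That, List.ofFn_eq_map, ← List.map_reverse]
    refine continuous_list_prod _ fun i _ => ?_
    refine continuous_matrix fun p q => ?_
    exact continuous_const.mul ((continuous_Rmat η _ _ _).comp (continuous_id.add continuous_const))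
  have hK : ContinuousAt (fun l => K0emb (N := N) ζ l θ) l₀ := by
    refine continuousAt_pi.2 fun p => continuousAt_pi.2 fun q => ?_
    refine continuousAt_const.mul ?_
    have hs := Complex.continuous_sinh
    have c1 : ContinuousAt (fun l => Complex.sinh (θ + ζ - l) / Complex.sinh (θ + ζ + l)) l₀ :=
      ContinuousAt.div (by fun_prop) (by fun_prop) h1
    have c2 : ContinuousAt (fun l => Complex.sinh (ζ - l) / Complex.sinh (ζ + l)) l₀ :=
      ContinuousAt.div (by fun_prop) (by fun_prop) h2
    obtain ⟨a, s⟩ := p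
    obtain ⟨b, t⟩ := q
    fin_cases a <;> fin_cases b <;> simp only [Kmat]
    · exact c1
    · exact continuousAt_const
    · exact continuousAt_const
    · exact c2
  have := (hT.continuousAt.mul hK).mul hT'.continuousAt
  exact continuousAt_pi.2 fun s => continuousAt_pi.2 fun t =>
    continuousAt_pi.1 (continuousAt_pi.1 this (0, s)) (1, t)

theorem sinh_eventually_ne (c l₀ : ℂ) :
    ∀ᶠ l in nhdsWithin l₀ {l₀}ᶜ, Complex.sinh (l + c) ≠ 0 := by
  by_cases h : Complex.sinh (l₀ + c) = 0
  · have hd : HasDerivAt (fun l => Complex.sinh (l + c)) (Complex.cosh (l₀ + c)) l₀ := by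
      simpa using ((hasDerivAt_id l₀).add_const c).csinh
    refine hd.eventually_ne ?_
    intro h'
    have := Complex.cosh_sq_sub_sinh_sq (l₀ + c)
    rw [h, h'] at this
    norm_num at this
  · have hc : Continuous fun l => Complex.sinh (l + c) :=
      Complex.continuous_sinh.comp (continuous_id.add continuous_const)
    exact (hc.continuousAt.eventually_ne h).filter_mono nhdsWithin_le_nhds

end Final

/-- The operators `ℬ` of the double-row monodromy matrix commute. -/
theorem B_commute (η ζ : ℂ) (N : ℕ) (hN : 1 ≤ N) (ξ : Fin N → ℂ) (lam1 lam2 θ : ℂ)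
    (hθ : ∀ k : ℤ, |k| ≤ (N : ℤ) + 1 → Complex.sinh (θ + (k : ℂ) * η) ≠ 0)
    (h1 : Complex.sinh (θ + ζ + lam1) ≠ 0) (h2 : Complex.sinh (ζ + lam1) ≠ 0)
    (h3 : Complex.sinh (θ + ζ + lam2) ≠ 0) (h4 : Complex.sinh (ζ + lam2) ≠ 0) :
    Bop η ζ ξ lam1 θ * Bop η ζ ξ lam2 θ = Bop η ζ ξ lam2 θ * Bop η ζ ξ lam1 θ := by
  have hB := continuousAt_Bop (η := η) ξ h1 h2
  have hL := (hB.mul (continuousAt_const (y := Bop η ζ ξ lam2 θ))).tendsto.mono_left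
    (nhdsWithin_le_nhds (s := {lam1}ᶜ))
  have hR := ((continuousAt_const (y := Bop η ζ ξ lam2 θ)).mul hB).tendsto.mono_left
    (nhdsWithin_le_nhds (s := {lam1}ᶜ))
  -- The genericity conditions on `lam1` hold on a punctured neighbourhood; pass to the limit.
  refine tendsto_nhds_unique_of_eventuallyEq hL hR ?_
  filter_upwards [sinh_eventually_ne (θ + ζ) lam1, sinh_eventually_ne ζ lam1,
    sinh_eventually_ne (-lam2 + η) lam1, sinh_eventually_ne lam2 lam1] with l k1 k2 k3 k4
  exact B_commute_generic hθ (by rwa [add_comm]) (by rwa [add_comm]) h3 h4 ξ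
    (by rwa [sub_eq_add_neg, add_assoc]) k4
end

section
/- The reversed monodromy matrix is proportional to the inverse of the bulk monodromy matrix: for all λ, θ ∈ ℂ (generic, so that sinh θ ≠ 0, sinh(θ+kη) ≠ 0 for the relevant integers k, and ∏_{i=1}^N sinh(λ+ξ_i−η) sinh(λ+ξ_i+η) ≠ 0, which guarantees T₀(−λ;θ) is invertible), one has T̂₀(λ;θ) = (−1)^N ∏_{i=1}^N sinh(λ+ξ_i−η) sinh(λ+ξ_i+η) · T₀(−λ;θ)^{−1}. -/
/-!
The theorem rests on the unitarity of the dynamical R-matrix,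
`R₂₁(λ;θ) R₁₂(−λ;θ) = −sinh(λ−η) sinh(λ+η) · 1` (`sum_Rmat_mul_Rmat`), a consequence of the
identity `sinh(x+y) sinh(x−y) = sinh² x − sinh² y`.

In the monodromy matrices, the dynamical shift at site `i` involves only the spins at the sites
`j > i`, which the operators acting at site `i` leave unchanged. Hence unitarity holds on each
joint eigenspace of these spins, and so for the embedded operators (`Ri0_mul_R0i`). The product
`T̂₀(λ;θ) T₀(−λ;θ) = R_{N0} ⋯ R_{10} R_{01} ⋯ R_{0N}` then collapses from the middle outwards to
a scalar (`reverse_prod_mul_prod`); since this scalar is nonzero, `T₀(−λ;θ)` is invertible and the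
formula follows.
-/

open Matrix

theorem sinh_add_mul_sinh_sub (x y : ℂ) :
    Complex.sinh (x + y) * Complex.sinh (x - y) = Complex.sinh x ^ 2 - Complex.sinh y ^ 2 := by
  rw [Complex.sinh_add, Complex.sinh_sub]
  linear_combination (Complex.sinh x ^ 2) * Complex.cosh_sq y -
    (Complex.sinh y ^ 2) * Complex.cosh_sq x

/-- Unitarity of the R-matrix, `R₂₁(λ;θ) R₁₂(−λ;θ) = −sinh(λ−η) sinh(λ+η) · 1`, in components:
`p` and `q` list the auxiliary index first and the quantum index second. -/
theorem sum_Rmat_mul_Rmat (η lam θ : ℂ) (hθ : Complex.sinh θ ≠ 0) (p q : Fin 2 × Fin 2) :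
    ∑ m : Fin 2 × Fin 2, Rmat η lam θ (p.2, p.1) (m.2, m.1) * Rmat η (-lam) θ m q =
      if p = q then -(Complex.sinh (lam - η) * Complex.sinh (lam + η)) else 0 := by
  have h1 := sinh_add_mul_sinh_sub θ η
  have h2 := sinh_add_mul_sinh_sub θ lam
  have h3 := sinh_add_mul_sinh_sub lam η
  have h4 : Complex.sinh (-lam + η) = -Complex.sinh (lam - η) := by
    rw [← Complex.sinh_neg]; congr 1; ring
  have h5 : θ + -lam = θ - lam := by ring
  have h6 : θ - -lam = θ + lam := by ring
  obtain ⟨p1, p2⟩ := p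
  obtain ⟨q1, q2⟩ := q
  rw [Fintype.sum_prod_type]
  fin_cases p1 <;> fin_cases p2 <;> fin_cases q1 <;> fin_cases q2 <;>
    simp [Rmat, Fin.sum_univ_two, h4, h5, h6] <;> field_simp <;> try ring1
  all_goals
    linear_combination (-Complex.sinh lam ^ 2) * h1 + Complex.sinh η ^ 2 * h2 +
      Complex.sinh θ ^ 2 * h3

/-- On any basis vector, `Σ_{c ∈ S} σ^z_c` has an integer eigenvalue of absolute value at most
`N`, so the genericity assumption on `θ` covers every dynamical shift. -/
theorem exists_int_szSum {N : ℕ} (S : Finset (Fin N)) (s : Fin N → Fin 2) :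
    ∃ k : ℤ, |k| ≤ (N : ℤ) ∧ szSum S s = k := by
  refine ⟨∑ j ∈ S, if s j = 0 then 1 else -1, ?_, ?_⟩
  · calc |∑ j ∈ S, (if s j = 0 then (1 : ℤ) else -1)|
        ≤ ∑ j ∈ S, |if s j = 0 then (1 : ℤ) else -1| := Finset.abs_sum_le_sum_abs _ _
      _ = ∑ j ∈ S, (1 : ℤ) := Finset.sum_congr rfl fun j _ => by split_ifs <;> simp
      _ = (S.card : ℤ) := by simp
      _ ≤ N := by simpa using Finset.card_le_univ S
  · simp [szSum, szval]

/-- Unitarity of the R-matrices embedded at site `i`. -/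
theorem Ri0_mul_R0i {N : ℕ} (η lam θ : ℂ) (i : Fin N)
    (hθ : ∀ s : Fin N → Fin 2,
      Complex.sinh (θ - η * szSum (Finset.univ.filter fun j => i < j) s) ≠ 0) :
    Ri0 η lam θ i * R0i η (-lam) θ i =
      (-(Complex.sinh (lam - η) * Complex.sinh (lam + η))) • (1 : Matrix _ _ ℂ) := by
  ext p q
  obtain ⟨p1, s⟩ := p
  obtain ⟨q1, t⟩ := q
  -- Only the intermediate states that agree with `t` away from site `i` contribute.
  have hinj : Function.Injective
      (fun m : Fin 2 × Fin 2 => (m.1, Function.update t i m.2)) := by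
    rintro ⟨a, b⟩ ⟨c, d⟩ h
    have h2 := congrFun (Prod.ext_iff.1 h).2 i
    simp at h2
    exact Prod.ext (Prod.ext_iff.1 h).1 h2
  rw [Matrix.mul_apply]
  rw [← Fintype.sum_of_injective _ hinj
    (fun m => (if ∀ j, j ≠ i → s j = t j then 1 else 0) *
      (Rmat η lam (θ - η * szSum (Finset.univ.filter fun j => i < j) t) (s i, p1) (m.2, m.1) *
      Rmat η (-lam) (θ - η * szSum (Finset.univ.filter fun j => i < j) t) m (q1, t i)))]
  · rw [← Finset.mul_sum, sum_Rmat_mul_Rmat η lam _ (hθ t) (p1, s i) (q1, t i)]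
    have hiff : ((p1, s) = (q1, t)) ↔ (∀ j, j ≠ i → s j = t j) ∧ (p1, s i) = (q1, t i) := by
      simp only [Prod.mk.injEq]
      constructor
      · rintro ⟨rfl, rfl⟩; simp
      · rintro ⟨h, rfl, h'⟩
        refine ⟨rfl, funext fun j => ?_⟩
        by_cases hj : j = i
        · rw [hj, h']
        · exact h j hj
    rw [Matrix.smul_apply, Matrix.one_apply, if_congr hiff rfl rfl]
    split_ifs <;> simp_all
  · rintro ⟨c, u⟩ hu
    have : ¬ ∀ j, j ≠ i → u j = t j := fun h => hu ⟨(c, u i), by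
      refine Prod.ext rfl (funext fun j => ?_)
      by_cases hj : j = i
      · subst hj; simp
      · simp [hj, h j hj]⟩
    simp only [R0i, Matrix.of_apply, if_neg this, zero_mul, mul_zero]
  · rintro ⟨c, d⟩
    have hsz : szSum (Finset.univ.filter fun j => i < j) (Function.update t i d) =
        szSum (Finset.univ.filter fun j => i < j) t := by
      refine Finset.sum_congr rfl fun j hj => ?_
      have : j ≠ i := ((Finset.mem_filter.1 hj).2).ne'
      simp [this]
    have h1 : (∀ j, j ≠ i → s j = Function.update t i d j) ↔ ∀ j, j ≠ i → s j = t j :=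
      forall₂_congr fun j hj => by simp [hj]
    have h2 : ∀ j, j ≠ i → Function.update t i d j = t j := fun j hj => by simp [hj]
    simp only [Ri0, R0i, Matrix.of_apply, hsz, if_congr h1 rfl rfl, if_pos h2,
      Function.update_self, one_mul, mul_assoc]

theorem reverse_prod_mul_prod {R : Type*} [Ring R] [Algebra ℂ R] (n : ℕ) (f g : Fin n → R)
    (c : Fin n → ℂ) (h : ∀ i, f i * g i = c i • (1 : R)) :
    (List.ofFn f).reverse.prod * (List.ofFn g).prod = (∏ i, c i) • (1 : R) := by
  induction n with
  | zero => simp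
  | succ n ih =>
    have key := ih (fun i => f i.succ) (fun i => g i.succ) (fun i => c i.succ) fun i => h i.succ
    rw [List.ofFn_succ, List.ofFn_succ, List.reverse_cons, List.prod_append, List.prod_singleton,
      List.prod_cons, mul_assoc, ← mul_assoc (f 0), h 0, smul_one_mul, mul_smul_comm, key,
      smul_smul, Fin.prod_univ_succ]

/-- The reversed monodromy matrix is proportional to the inverse of the bulk
monodromy matrix:
`T̂₀(λ;θ) = (−1)^N ∏ᵢ sinh(λ+ξᵢ−η) sinh(λ+ξᵢ+η) · T₀(−λ;θ)⁻¹`. -/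
theorem That_eq_smul_inv_Tmat (η : ℂ) (N : ℕ) (hN : 1 ≤ N) (ξ : Fin N → ℂ) (lam θ : ℂ)
    (hθ : ∀ k : ℤ, |k| ≤ (N : ℤ) + 1 → Complex.sinh (θ + (k : ℂ) * η) ≠ 0)
    (hprod : (∏ i : Fin N, Complex.sinh (lam + ξ i - η) * Complex.sinh (lam + ξ i + η)) ≠ 0) :
    That η ξ lam θ =
      ((-1 : ℂ) ^ N * ∏ i : Fin N, Complex.sinh (lam + ξ i - η) * Complex.sinh (lam + ξ i + η)) •
        (Tmat η ξ (-lam) θ)⁻¹ := by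
  have hshift : ∀ (i : Fin N) (s : Fin N → Fin 2),
      Complex.sinh (θ - η * szSum (Finset.univ.filter fun j => i < j) s) ≠ 0 := by
    intro i s
    obtain ⟨k, hk, hs⟩ := exists_int_szSum (Finset.univ.filter fun j => i < j) s
    have := hθ (-k) (by rw [abs_neg]; omega)
    rw [hs]
    convert this using 2
    push_cast
    ring
  have hmul := reverse_prod_mul_prod N (fun i => Ri0 η (lam + ξ i) θ i)
    (fun i => R0i η (-lam - ξ i) θ i)
    (fun i => -(Complex.sinh (lam + ξ i - η) * Complex.sinh (lam + ξ i + η)))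
    (fun i => by
      rw [← Ri0_mul_R0i η (lam + ξ i) θ i (hshift i), neg_add'])
  rw [Finset.prod_neg, Finset.card_univ, Fintype.card_fin] at hmul
  change That η ξ lam θ * Tmat η ξ (-lam) θ = _ at hmul
  set K := (-1 : ℂ) ^ N *
    ∏ i : Fin N, Complex.sinh (lam + ξ i - η) * Complex.sinh (lam + ξ i + η) with hK
  have hK0 : K ≠ 0 := mul_ne_zero (pow_ne_zero _ (by norm_num)) hprod
  have hinv : (Tmat η ξ (-lam) θ)⁻¹ = K⁻¹ • That η ξ lam θ :=
    Matrix.inv_eq_left_inv (by rw [smul_mul_assoc, hmul, smul_smul, inv_mul_cancel₀ hK0, one_smul])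
  rw [hinv, smul_smul, mul_inv_cancel₀ hK0, one_smul]
end

section
/- The two expressions for the matrix M coincide: for generic λ_i, ξ_j, θ, η, ζ ∈ ℂ (all denominators below nonzero), (sinh(θ+ζ−λ_i)/sinh(θ+ζ+λ_i))·M⁺_{ij} + (sinh(ζ−λ_i)/sinh(ζ+λ_i))·M⁻_{ij} = [ sinh(θ+ζ+ξ_j)/sinh(θ+ζ+λ_i) ] · [ sinh(ζ−ξ_j)/sinh(ζ+λ_i) ] · sinh(2λ_i) sinh η / [ sinh(λ_i−ξ_j+η) sinh(λ_i+ξ_j+η) sinh(λ_i−ξ_j) sinh(λ_i+ξ_j) ]. -/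
/-!
The subtraction identities `sinh θ sinh (u + η) - sinh (θ - η) sinh u = sinh η sinh (θ + u)` and
(replacing `θ` by `-θ`) its mirror image collapse each of `M⁺`, `M⁻` into a single product
(`Mplus_eq`, `Mminus_eq`). After clearing denominators, what remains is a three-term (Weierstrass
type) relation between products of four hyperbolic sines (`sinh_three_term`), which is a Laurent
polynomial identity in the exponentials of the variables.
-/

/-- `M⁺_{ij}` as a function of `λ_i` and `ξ_j`. -/
noncomputable def Mplus (η θ lam ξ : ℂ) : ℂ :=
  1 / Complex.sinh (lam - ξ + η) *
    (1 / Complex.sinh (lam + ξ) -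
      Complex.sinh (θ - η) / (Complex.sinh θ * Complex.sinh (lam + ξ + η)))

/-- `M⁻_{ij}` as a function of `λ_i` and `ξ_j`. -/
noncomputable def Mminus (η θ lam ξ : ℂ) : ℂ :=
  1 / Complex.sinh (lam + ξ + η) *
    (1 / Complex.sinh (lam - ξ) -
      Complex.sinh (θ + η) / (Complex.sinh θ * Complex.sinh (lam - ξ + η)))

open Complex in
theorem sinh_mul_sub (θ u η : ℂ) :
    sinh θ * sinh (u + η) - sinh (θ - η) * sinh u = sinh η * sinh (θ + u) := by
  simp only [sinh_add, sinh_sub]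
  ring

open Complex in
theorem Mplus_eq (η θ lam ξ : ℂ) (hθ : sinh θ ≠ 0) (h3 : sinh (lam + ξ) ≠ 0)
    (h5 : sinh (lam + ξ + η) ≠ 0) :
    Mplus η θ lam ξ = sinh η * sinh (θ + (lam + ξ)) /
      (sinh θ * sinh (lam + ξ) * sinh (lam + ξ + η) * sinh (lam - ξ + η)) := by
  rw [← sinh_mul_sub, Mplus]
  field_simp

open Complex in
theorem Mminus_eq (η θ lam ξ : ℂ) (hθ : sinh θ ≠ 0) (h4 : sinh (lam - ξ) ≠ 0)
    (h6 : sinh (lam - ξ + η) ≠ 0) :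
    Mminus η θ lam ξ = sinh η * sinh (θ - (lam - ξ)) /
      (sinh θ * sinh (lam - ξ) * sinh (lam - ξ + η) * sinh (lam + ξ + η)) := by
  have h : sinh θ * sinh (lam - ξ + η) - sinh (θ + η) * sinh (lam - ξ) =
      sinh η * sinh (θ - (lam - ξ)) := by
    have := sinh_mul_sub (-θ) (lam - ξ) η
    rw [show -θ - η = -(θ + η) by ring, show -θ + (lam - ξ) = -(θ - (lam - ξ)) by ring] at this
    simp only [sinh_neg] at this
    linear_combination -this
  rw [← h, Mminus]
  field_simp

open Complex in
/-- The numerator identity left after clearing denominators: a three-term relation, the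
trigonometric degeneration of the Weierstrass relation for sigma functions. -/
theorem sinh_three_term (ζ lam ξ θ : ℂ) :
    sinh (θ + ζ - lam) * sinh (ζ + lam) * sinh (θ + (lam + ξ)) * sinh (lam - ξ) +
      sinh (ζ - lam) * sinh (θ + ζ + lam) * sinh (θ - (lam - ξ)) * sinh (lam + ξ) =
    sinh θ * sinh (θ + ζ + ξ) * sinh (ζ - ξ) * sinh (2 * lam) := by
  have e := exp_ne_zero
  simp only [sinh, neg_add_rev, neg_sub, two_mul, exp_add, exp_sub, exp_neg]
  have := e θ; have := e ζ; have := e lam; have := e ξ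
  field_simp
  ring

/-- The two expressions for the matrix element `M_{ij}` coincide. -/
theorem M_entry_alt_form (η ζ lam ξ θ : ℂ) (hθ : Complex.sinh θ ≠ 0)
    (h1 : Complex.sinh (θ + ζ + lam) ≠ 0) (h2 : Complex.sinh (ζ + lam) ≠ 0)
    (h3 : Complex.sinh (lam + ξ) ≠ 0) (h4 : Complex.sinh (lam - ξ) ≠ 0)
    (h5 : Complex.sinh (lam + ξ + η) ≠ 0) (h6 : Complex.sinh (lam - ξ + η) ≠ 0) :
    Complex.sinh (θ + ζ - lam) / Complex.sinh (θ + ζ + lam) * Mplus η θ lam ξ +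
        Complex.sinh (ζ - lam) / Complex.sinh (ζ + lam) * Mminus η θ lam ξ =
      Complex.sinh (θ + ζ + ξ) / Complex.sinh (θ + ζ + lam) *
        (Complex.sinh (ζ - ξ) / Complex.sinh (ζ + lam)) *
        (Complex.sinh (2 * lam) * Complex.sinh η /
          (Complex.sinh (lam - ξ + η) * Complex.sinh (lam + ξ + η) *
            Complex.sinh (lam - ξ) * Complex.sinh (lam + ξ))) := by
  rw [Mplus_eq η θ lam ξ hθ h3 h5, Mminus_eq η θ lam ξ hθ h4 h6]
  have key := sinh_three_term ζ lam ξ θ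
  -- Hiding the arguments keeps `field_simp` from rewriting inside `sinh`.
  generalize Complex.sinh (lam - ξ + η) = A at *
  generalize Complex.sinh (lam + ξ + η) = B at *
  generalize Complex.sinh (lam + ξ) = C at *
  generalize Complex.sinh (lam - ξ) = D at *
  generalize Complex.sinh (θ + ζ + lam) = E at *
  generalize Complex.sinh (ζ + lam) = F at *
  generalize Complex.sinh (θ + ζ - lam) = G at *
  generalize Complex.sinh (ζ - lam) = H at *
  generalize Complex.sinh (θ + (lam + ξ)) = I at *
  generalize Complex.sinh (θ - (lam - ξ)) = J at *
  generalize Complex.sinh (θ + ζ + ξ) = K at *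
  generalize Complex.sinh (ζ - ξ) = L at *
  generalize Complex.sinh (2 * lam) = N at *
  generalize Complex.sinh θ = T at *
  generalize Complex.sinh η = S at *
  field_simp
  linear_combination S * key
end
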